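/- arXiv:2512.06741 — 3 statements merged into one kernel-verified Lean document; each statement's English description precedes it below -/
import Mathlib

section
/- Let β > 1 and let φ : ℕ → ℝ be non-decreasing with η := liminf_{n→∞} φ(n)/n ≥ 1. Then the Hausdorff dimension of { x ∈ [0,1] : liminf_{n→∞} (1/φ(n)) log_β |x − ω_n(x)| = −1 } equals 1/η. -/
open Filter MeasureTheory Set

noncomputable def Tb (β : ℝ) (x : ℝ) : ℝ := Int.fract (β * x)

/-- `dig β x n` is the (n+1)-st digit `ε_{n+1}(x)` of the β-expansion of `x`. -/
noncomputable def dig (β : ℝ) (x : ℝ) (n : ℕ) : ℤ := ⌊β * (Tb β)^[n] x⌋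

/-- `conv β x n` is the n-th convergent `ω_n(x)` of the β-expansion of `x`. -/
noncomputable def conv (β : ℝ) (x : ℝ) (n : ℕ) : ℝ :=
  ∑ k ∈ Finset.range n, (dig β x k : ℝ) / β ^ (k + 1)

/-- The n-th order cylinder determined by the word `w`. -/
def cyl (β : ℝ) {n : ℕ} (w : Fin n → ℤ) : Set ℝ :=
  {x ∈ Set.Ico (0:ℝ) 1 | ∀ k : Fin n, dig β x k = w k}

/-- A finite word is β-admissible if it is the beginning of the β-expansion of some x ∈ [0,1]. -/
def admissible (β : ℝ) {n : ℕ} (w : Fin n → ℤ) : Prop :=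
  ∃ x ∈ Set.Icc (0:ℝ) 1, ∀ k : Fin n, dig β x k = w k

/-! ### Basic facts about the map -/

lemma Tb_nonneg (β x : ℝ) : 0 ≤ Tb β x := Int.fract_nonneg _

lemma Tb_lt_one (β x : ℝ) : Tb β x < 1 := Int.fract_lt_one _

lemma Tb_it_nonneg (β : ℝ) {x : ℝ} (hx : 0 ≤ x) (n : ℕ) : 0 ≤ (Tb β)^[n] x := by
  cases n with
  | zero => simpa
  | succ n => rw [Function.iterate_succ_apply']; exact Tb_nonneg _ _

lemma Tb_it_lt_one (β : ℝ) {x : ℝ} (hx : x < 1) (n : ℕ) : (Tb β)^[n] x < 1 := by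
  cases n with
  | zero => simpa
  | succ n => rw [Function.iterate_succ_apply']; exact Tb_lt_one _ _

lemma Tb_it_le_pow {β : ℝ} (hβ : 1 < β) {x : ℝ} (hx : 0 ≤ x) (m : ℕ) :
    (Tb β)^[m] x ≤ β ^ m * x := by
  induction m with
  | zero => simp
  | succ m ih =>
    rw [Function.iterate_succ_apply']
    have h0 := Tb_it_nonneg β hx m
    have h1 : Tb β ((Tb β)^[m] x) ≤ β * (Tb β)^[m] x := by
      unfold Tb
      have : (0:ℝ) ≤ ⌊β * (Tb β)^[m] x⌋ := by
        exact_mod_cast Int.floor_nonneg.2 (by positivity)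
      unfold Tb at this
      rw [Int.fract]; linarith
    calc _ ≤ _ := h1
      _ ≤ β * (β ^ m * x) := by gcongr
      _ = _ := by ring

lemma Tb_it_succ (β x : ℝ) (n : ℕ) :
    (Tb β)^[n+1] x = β * (Tb β)^[n] x - dig β x n := by
  rw [Function.iterate_succ_apply']; rfl

lemma conv_succ (β x : ℝ) (n : ℕ) :
    conv β x (n+1) = conv β x n + (dig β x n : ℝ) / β ^ (n+1) := by
  simp [conv, Finset.sum_range_succ]

lemma sub_conv {β : ℝ} (hβ : 1 < β) (x : ℝ) (n : ℕ) :
    x - conv β x n = (Tb β)^[n] x / β ^ n := by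
  have hb : β ≠ 0 := by positivity
  induction n with
  | zero => simp [conv]
  | succ n ih =>
    rw [conv_succ, Tb_it_succ, ← sub_sub, ih, pow_succ]
    field_simp

/-! ### Full cylinders, recorded by their left endpoints -/

def FullS (β : ℝ) (n : ℕ) : Set ℝ :=
  {y | 0 ≤ y ∧ ∀ t, 0 ≤ t → t < 1 → y + t / β ^ n < 1 ∧ (Tb β)^[n] (y + t / β ^ n) = t}

lemma FullS_le {β : ℝ} (hβ : 1 < β) {n : ℕ} {y : ℝ} (hy : y ∈ FullS β n) :
    y + 1 / β ^ n ≤ 1 := by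
  have hp : 0 < β ^ n := by positivity
  by_contra! h
  have h1 : 1 - y < 1 / β ^ n := by linarith
  have h2 : (1 - y) * β ^ n < 1 := by rwa [lt_div_iff₀ hp] at h1
  have h3 := (hy.2 0 le_rfl one_pos).1
  simp at h3
  have h4 := (hy.2 ((1 - y) * β ^ n) (by have : 0 < 1 - y := by linarith
                                         positivity) h2).1
  rw [mul_div_assoc, div_self hp.ne'] at h4
  linarith

lemma FullS_sep {β : ℝ} (hβ : 1 < β) {n : ℕ} {y y' : ℝ} (hy : y ∈ FullS β n)
    (hy' : y' ∈ FullS β n) (h : y < y') : y + 1 / β ^ n ≤ y' := by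
  have hp : 0 < β ^ n := by positivity
  by_contra! h1
  have h1 : y' - y < 1 / β ^ n := by linarith
  have h2 : (y' - y) * β ^ n < 1 := by rwa [lt_div_iff₀ hp] at h1
  have h0 : 0 < (y' - y) * β ^ n := by have : 0 < y' - y := by linarith
                                       positivity
  have h4 := (hy.2 _ h0.le h2).2
  rw [mul_div_assoc, div_self hp.ne'] at h4
  have h5 := (hy'.2 0 le_rfl one_pos).2
  simp at h5
  rw [mul_one, add_sub_cancel] at h4
  linarith

lemma FullS_zero_mem {β : ℝ} (hβ : 1 < β) (n : ℕ) : (0:ℝ) ∈ FullS β n := by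
  refine ⟨le_rfl, fun t ht0 ht1 => ?_⟩
  have hp : 1 ≤ β ^ n := one_le_pow₀ hβ.le
  refine ⟨?_, ?_⟩
  · rw [zero_add]; exact (div_le_self ht0 hp).trans_lt ht1
  · rw [zero_add]
    clear hp
    induction n with
    | zero => simp
    | succ n ih =>
      have hb : β ≠ 0 := by positivity
      rw [Function.iterate_succ_apply]
      have : Tb β (t / β ^ (n+1)) = t / β ^ n := by
        unfold Tb
        have e : β * (t / β ^ (n+1)) = t / β ^ n := by rw [pow_succ]; field_simp
        rw [e, Int.fract_eq_self]
        exact ⟨by positivity, (div_le_self ht0 (one_le_pow₀ hβ.le)).trans_lt ht1⟩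
      rw [this, ih]

lemma FullS_step {β : ℝ} (hβ : 1 < β) {n : ℕ} {a τ : ℝ}
    (h : ∀ t, 0 ≤ t → t < τ → a + t / β ^ n < 1 ∧ (Tb β)^[n] (a + t / β ^ n) = t)
    (d : ℤ) (hd0 : 0 ≤ d) (τ' : ℝ) (hτ1 : τ' ≤ 1) (hτ : d + τ' ≤ β * τ) :
    ∀ t, 0 ≤ t → t < τ' → (a + d / β ^ (n+1)) + t / β ^ (n+1) < 1 ∧
      (Tb β)^[n+1] ((a + d / β ^ (n+1)) + t / β ^ (n+1)) = t := by
  intro t ht0 ht1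
  have hb : β ≠ 0 := by positivity
  have e : (a + d / β ^ (n+1)) + t / β ^ (n+1) = a + ((d + t) / β) / β ^ n := by
    field_simp; ring
  have hd0' : (0:ℝ) ≤ d := by exact_mod_cast hd0
  have h1 := h ((d + t) / β) (by positivity) (by rw [div_lt_iff₀ (by positivity)]; linarith)
  rw [e]
  refine ⟨h1.1, ?_⟩
  rw [Function.iterate_succ_apply', h1.2]
  unfold Tb
  rw [mul_div_cancel₀ _ hb, Int.fract_intCast_add, Int.fract_eq_self]
  exact ⟨ht0, ht1.trans_le hτ1⟩

lemma FullS_mono {β : ℝ} (hβ : 1 < β) : Monotone (FullS β) := by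
  refine monotone_nat_of_le_succ fun n y hy => ⟨hy.1, ?_⟩
  have := FullS_step hβ hy.2 0 le_rfl 1 le_rfl (by simp; linarith)
  simpa using this

lemma FullS_floor_injOn {β : ℝ} (hβ : 1 < β) (n : ℕ) :
    Set.InjOn (fun y : ℝ => ⌊y * β ^ n⌋₊) (FullS β n) := by
  have hp : 0 < β ^ n := by positivity
  have key : ∀ y ∈ FullS β n, ∀ y' ∈ FullS β n, ⌊y * β ^ n⌋₊ = ⌊y' * β ^ n⌋₊ → ¬ y < y' := by
    intro y hy y' hy' h hlt
    have h1 := FullS_sep hβ hy hy' hlt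
    have h2 : y * β ^ n + 1 ≤ y' * β ^ n := by
      have := mul_le_mul_of_nonneg_right h1 hp.le
      rwa [add_mul, one_div, inv_mul_cancel₀ hp.ne'] at this
    have h3 := Nat.floor_le (a := y * β ^ n) (mul_nonneg hy.1 hp.le)
    have h4 := Nat.lt_floor_add_one (y' * β ^ n)
    rw [← h] at h4
    linarith
  intro y hy y' hy' h
  exact le_antisymm (not_lt.1 (key y' hy' y hy h.symm)) (not_lt.1 (key y hy y' hy' h))

lemma FullS_floor_mapsTo {β : ℝ} (hβ : 1 < β) (n : ℕ) :
    Set.MapsTo (fun y : ℝ => ⌊y * β ^ n⌋₊) (FullS β n) (Finset.range ⌊β ^ n⌋₊ : Finset ℕ) := by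
  intro y hy
  have hp : 0 < β ^ n := by positivity
  have h1 := FullS_le hβ hy
  have h2 : y * β ^ n + 1 ≤ β ^ n := by
    have := mul_le_mul_of_nonneg_right h1 hp.le
    rwa [add_mul, one_div, inv_mul_cancel₀ hp.ne', one_mul] at this
  simp only [Finset.coe_range, Set.mem_Iio]
  have h3 := mul_nonneg hy.1 hp.le
  have : ⌊y * β ^ n + 1⌋₊ ≤ ⌊β ^ n⌋₊ := Nat.floor_le_floor h2
  rw [Nat.floor_add_one h3] at this
  omega

lemma FullS_finite {β : ℝ} (hβ : 1 < β) (n : ℕ) : (FullS β n).Finite :=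
  Set.Finite.of_injOn (FullS_floor_mapsTo hβ n) (FullS_floor_injOn hβ n) (Finset.finite_toSet _)

lemma FullS_card_le {β : ℝ} (hβ : 1 < β) (n : ℕ) : ((FullS β n).ncard : ℝ) ≤ β ^ n := by
  have h := Set.ncard_le_ncard_of_injOn _ (FullS_floor_mapsTo hβ n) (FullS_floor_injOn hβ n)
    (Finset.finite_toSet _)
  rw [Set.ncard_coe_finset, Finset.card_range] at h
  calc ((FullS β n).ncard : ℝ) ≤ (⌊β ^ n⌋₊ : ℝ) := by exact_mod_cast h
    _ ≤ _ := Nat.floor_le (by positivity)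

lemma cover_aux {β : ℝ} (hβ : 1 < β) {x : ℝ} (hx : x ∈ Set.Ico (0:ℝ) 1) (n : ℕ) :
    ∃ k m : ℕ, m + k = n ∧ ∃ y ∈ FullS β m, conv β x n = y + conv β 1 k / β ^ m ∧
      0 ≤ conv β x n ∧ (Tb β)^[n] x < (Tb β)^[k] 1 ∧
      ∀ t, 0 ≤ t → t < (Tb β)^[k] 1 → conv β x n + t / β ^ n < 1 ∧
        (Tb β)^[n] (conv β x n + t / β ^ n) = t := by
  have hb : β ≠ 0 := by positivity
  induction n with
  | zero =>
    refine ⟨0, 0, rfl, 0, FullS_zero_mem hβ 0, by simp [conv], by simp [conv], by simpa using hx.2, ?_⟩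
    intro t h0 h1
    simp at h1
    simpa [conv] using h1
  | succ n ih =>
    obtain ⟨k, m, hkm, y, hy, hc, hc0, hlt, hgood⟩ := ih
    have hu0 := Tb_it_nonneg β hx.1 n
    have hd0 : 0 ≤ dig β x n := Int.floor_nonneg.2 (by positivity)
    have hd0' : (0:ℝ) ≤ dig β x n := by exact_mod_cast hd0
    have hc' : 0 ≤ conv β x (n+1) := by
      rw [conv_succ]; positivity
    have hTx := Tb_it_succ β x n
    by_cases hcase : (dig β x n : ℝ) + 1 ≤ β * (Tb β)^[k] 1
    · have := FullS_step hβ hgood (dig β x n) hd0 1 le_rfl hcase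
      rw [← conv_succ] at this
      refine ⟨0, n+1, rfl, conv β x (n+1), ⟨hc', this⟩, by simp [conv], hc', ?_, ?_⟩
      · simpa using Tb_it_lt_one β hx.2 (n+1)
      · simpa using this
    · push Not at hcase
      have h1 : (dig β x n : ℝ) ≤ β * (Tb β)^[n] x := Int.floor_le _
      have h2 : β * (Tb β)^[n] x < β * (Tb β)^[k] 1 := by gcongr
      have hdig : dig β 1 k = dig β x n := by
        conv_lhs => unfold dig
        rw [Int.floor_eq_iff]
        exact ⟨by linarith, hcase⟩
      have hT1 := Tb_it_succ β 1 k
      rw [hdig] at hT1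
      have hT1' : (Tb β)^[k+1] 1 < 1 := by rw [hT1]; linarith
      have := FullS_step hβ hgood (dig β x n) hd0 ((Tb β)^[k+1] 1) hT1'.le
        (by rw [hT1]; linarith)
      rw [← conv_succ] at this
      refine ⟨k+1, m, by omega, y, hy, ?_, hc', ?_, this⟩
      · rw [conv_succ, conv_succ, hdig, hc, ← hkm]
        field_simp
        ring
      · rw [hTx, hT1]; linarith

lemma exists_cover {β : ℝ} (hβ : 1 < β) (n : ℕ) :
    ∃ G : Finset ℝ, (∀ x ∈ Set.Ico (0:ℝ) 1, conv β x n ∈ G) ∧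
      G.card ≤ (n + 1) * (FullS β n).ncard := by
  classical
  let F : ℕ → Finset ℝ := fun m => (FullS_finite hβ m).toFinset
  refine ⟨(Finset.range (n+1)).biUnion fun m =>
    (F m).image fun y => y + conv β 1 (n - m) / β ^ m, ?_, ?_⟩
  · intro x hx
    obtain ⟨k, m, hkm, y, hy, hc, -⟩ := cover_aux hβ hx n
    simp only [Finset.mem_biUnion, Finset.mem_range, Finset.mem_image]
    refine ⟨m, by omega, y, by simpa [F] using hy, ?_⟩
    rw [hc, ← hkm, Nat.add_sub_cancel_left]
  · refine (Finset.card_biUnion_le_card_mul _ _ (FullS β n).ncard ?_).trans (by simp)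
    intro m hm
    refine Finset.card_image_le.trans ?_
    rw [← Set.ncard_eq_toFinset_card _ (FullS_finite hβ m)]
    exact Set.ncard_le_ncard (FullS_mono hβ (by simp at hm; omega)) (FullS_finite hβ n)

lemma FullS_card_ge {β : ℝ} (hβ : 1 < β) (n : ℕ) :
    β ^ n ≤ (n + 1) * ((FullS β n).ncard : ℝ) := by
  obtain ⟨G, hG, hc⟩ := exists_cover hβ n
  have hp : 0 < β ^ n := by positivity
  have hsub : Set.Ico (0:ℝ) 1 ⊆ ⋃ a ∈ G, Set.Icc a (a + 1 / β ^ n) := by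
    intro x hx
    simp only [Set.mem_iUnion]
    refine ⟨conv β x n, hG x hx, ?_⟩
    have h := sub_conv hβ x n
    have h0 : 0 ≤ (Tb β)^[n] x / β ^ n := by
      have := Tb_it_nonneg β hx.1 n
      positivity
    have h1 : (Tb β)^[n] x / β ^ n ≤ 1 / β ^ n := by
      have := Tb_it_lt_one β hx.2 n
      gcongr
    constructor <;> linarith
  have h1 : volume (Set.Ico (0:ℝ) 1) ≤ ∑ a ∈ G, volume (Set.Icc a (a + 1 / β ^ n)) :=
    (measure_mono hsub).trans (measure_biUnion_finset_le _ _)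
  simp only [Real.volume_Ico, Real.volume_Icc, add_sub_cancel_left, sub_zero, Finset.sum_const,
    nsmul_eq_mul] at h1
  rw [← ENNReal.ofReal_natCast, ← ENNReal.ofReal_mul (by positivity),
    ENNReal.ofReal_le_ofReal_iff (by positivity)] at h1
  rw [mul_one_div, one_le_div hp] at h1
  refine h1.trans ?_
  exact_mod_cast hc

/-! ### Real liminf -/

lemma liminf_spec {f : ℕ → ℝ} {L : ℝ} (h : Filter.atTop.liminf f = L) (hL : L ≠ 0) :
    (∀ b, L < b → ∃ᶠ n in atTop, f n < b) ∧ (∀ b, b < L → ∀ᶠ n in atTop, b < f n) := by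
  rw [Filter.liminf_eq] at h
  have hne : {a | ∀ᶠ n in atTop, a ≤ f n}.Nonempty := by
    by_contra hn
    rw [Set.not_nonempty_iff_eq_empty] at hn
    rw [hn, Real.sSup_empty] at h
    exact hL h.symm
  have hbd : BddAbove {a | ∀ᶠ n in atTop, a ≤ f n} := by
    by_contra hn
    rw [Real.sSup_of_not_bddAbove hn] at h
    exact hL h.symm
  constructor
  · intro b hb hcon
    have : b ∈ {a | ∀ᶠ n in atTop, a ≤ f n} := by
      filter_upwards [hcon] with n hn using not_lt.1 hn
    have := le_csSup hbd this
    linarith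
  · intro b hb
    rw [← h] at hb
    obtain ⟨a, ha, hba⟩ := exists_lt_of_lt_csSup hne hb
    filter_upwards [ha] with n hn using hba.trans_le hn

lemma liminf_eq_of_spec {f : ℕ → ℝ} {L : ℝ} (h1 : ∃ᶠ n in atTop, f n ≤ L)
    (h2 : ∀ b, b < L → ∀ᶠ n in atTop, b ≤ f n) : Filter.atTop.liminf f = L := by
  rw [Filter.liminf_eq]
  apply csSup_eq_of_forall_le_of_forall_lt_exists_gt
  · exact ⟨L - 1, h2 _ (by linarith)⟩
  · intro a ha
    obtain ⟨n, hn1, hn2⟩ := (h1.and_eventually ha).exists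
    exact hn2.trans hn1
  · intro w hw
    exact ⟨(w + L) / 2, h2 _ (by linarith), by linarith⟩

/-! ### Upper bound -/

lemma upper_meas {β : ℝ} (hβ : 1 < β) {φ : ℕ → ℝ} {η : ℝ}
    (hη : Filter.atTop.liminf (fun n : ℕ => φ n / n) = η) (hη1 : 1 ≤ η) (s : NNReal)
    (hs : 1 / η < s) :
    μH[(s:ℝ)] {x ∈ Set.Ico (0:ℝ) 1 |
        Filter.atTop.liminf (fun n : ℕ => Real.logb β |x - conv β x n| / φ n) = -1} = 0 := by
  have hs0 : (0:ℝ) < s := lt_trans (by positivity) hs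
  have hβ0 : 0 < β := by positivity
  obtain ⟨θ, hθ1, hθ2⟩ := exists_between (show 1 / (s:ℝ) < η by
    rw [div_lt_iff₀ hs0]; rw [div_lt_iff₀ (by positivity)] at hs; linarith)
  obtain ⟨η1, h1, h2⟩ := exists_between hθ2
  have hθ0 : 0 < θ := lt_trans (by positivity) hθ1
  have hη10 : 0 < η1 := hθ0.trans h1
  have hsθ : 1 < θ * s := by rwa [div_lt_iff₀ hs0] at hθ1
  choose G hG hGc using exists_cover hβ
  have hφ := (liminf_spec hη (by positivity)).2 η1 h2
  set ρ : ℝ := β ^ (1 - θ * s) with hρ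
  have hρ0 : 0 < ρ := by positivity
  have hρ1 : ρ < 1 := Real.rpow_lt_one_of_one_lt_of_neg hβ (by linarith)
  let a : ℕ → ℝ := fun n => 2 ^ (s:ℝ) * ((n + 1) * ρ ^ n)
  have ha0 : ∀ n, 0 ≤ a n := fun n => by positivity
  have hasum : Summable a := by
    refine Summable.mul_left _ ?_
    have h1 := summable_pow_mul_geometric_of_norm_lt_one 1 (r := ρ)
      (by rwa [Real.norm_of_nonneg hρ0.le])
    have h2 := summable_geometric_of_lt_one hρ0.le hρ1
    refine (h1.add h2).congr fun n => ?_
    simp; ring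
  have htail : Tendsto (fun m => ∑' p, ENNReal.ofReal (a (p + m))) atTop (nhds 0) :=
    ENNReal.tendsto_sum_nat_add (fun n => ENNReal.ofReal (a n)) hasum.tsum_ofReal_ne_top
  let ι : ℕ → Type := fun m => (p : ℕ) × (G (p + m))
  let t : ∀ m, ι m → Set ℝ := fun m i => Metric.closedBall (i.2 : ℝ) (β ^ (-θ * (i.1 + m : ℕ)))
  have hdiam : ∀ m (i : ι m), Metric.ediam (t m i) ≤
      ENNReal.ofReal (2 * β ^ (-θ * (i.1 + m : ℕ))) := by
    intro m i
    simp only [t]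
    rw [Real.closedBall_eq_Icc, Real.ediam_Icc]
    apply ENNReal.ofReal_le_ofReal
    linarith
  have hle : μH[(s:ℝ)] {x ∈ Set.Ico (0:ℝ) 1 |
        Filter.atTop.liminf (fun n : ℕ => Real.logb β |x - conv β x n| / φ n) = -1} ≤
      Filter.atTop.liminf (fun m => ∑' i, Metric.ediam (t m i) ^ (s:ℝ)) := by
    refine Measure.hausdorffMeasure_le_liminf_tsum (s:ℝ) _
      (fun m : ℕ => ENNReal.ofReal (2 * β ^ (-θ * (m:ℝ)))) ?_ t ?_ ?_
    · rw [← ENNReal.ofReal_zero]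
      refine ENNReal.tendsto_ofReal ?_
      rw [← mul_zero (2:ℝ)]
      refine Tendsto.const_mul _ ?_
      have : ∀ m : ℕ, β ^ (-θ * (m:ℝ)) = (β ^ (-θ)) ^ m := fun m => by
        rw [Real.rpow_mul hβ0.le, Real.rpow_natCast]
      simp_rw [this]
      exact tendsto_pow_atTop_nhds_zero_of_lt_one (by positivity)
        (Real.rpow_lt_one_of_one_lt_of_neg hβ (by linarith))
    · refine Eventually.of_forall fun m i => (hdiam m i).trans ?_
      apply ENNReal.ofReal_le_ofReal
      gcongr 2 * ?_
      apply Real.rpow_le_rpow_of_exponent_le hβ.le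
      push_cast
      have : 0 ≤ θ * (i.1:ℝ) := by positivity
      linarith
    · refine Eventually.of_forall fun m x hx => ?_
      have hb : -1 < -(θ / η1) := by
        have : θ / η1 < 1 := by rwa [div_lt_one hη10]
        linarith
      have hfr := (liminf_spec hx.2 (by norm_num)).1 _ hb
      obtain ⟨n, hn1, hn2, hn3⟩ :=
        (hfr.and_eventually (hφ.and (eventually_ge_atTop (m + 1)))).exists
      have hn0 : (0:ℝ) < n := by exact_mod_cast (by omega : 0 < n)
      rw [lt_div_iff₀ hn0] at hn2
      have hφ0 : 0 < φ n := lt_trans (by positivity) hn2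
      rw [div_lt_iff₀ hφ0] at hn1
      have hlog : Real.logb β |x - conv β x n| < -θ * n := by
        have : θ / η1 * (η1 * n) = θ * n := by field_simp
        have : θ / η1 * (η1 * n) ≤ θ / η1 * φ n := by gcongr
        linarith
      have hpos : 0 < |x - conv β x n| := by
        rcases (abs_nonneg (x - conv β x n)).eq_or_lt with h | h
        · rw [← h, Real.logb_zero] at hlog
          have : 0 < θ * n := by positivity
          linarith
        · exact h
      rw [Real.logb_lt_iff_lt_rpow hβ hpos] at hlog
      obtain ⟨p, rfl⟩ : ∃ p, n = p + m := ⟨n - m, by omega⟩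
      simp only [Set.mem_iUnion]
      refine ⟨⟨p, ⟨conv β x (p + m), hG _ x hx.1⟩⟩, ?_⟩
      simp only [t, Metric.mem_closedBall, Real.dist_eq]
      exact hlog.le
  have hsum : ∀ m, ∑' i, Metric.ediam (t m i) ^ (s:ℝ) ≤ ∑' p, ENNReal.ofReal (a (p + m)) := by
    intro m
    refine (ENNReal.tsum_sigma' (fun i : (p : ℕ) × (G (p + m)) =>
      Metric.ediam (t m i) ^ (s:ℝ))).trans_le ?_
    refine ENNReal.tsum_le_tsum fun p => ?_
    have hterm : ∀ c : G (p + m), Metric.ediam (t m ⟨p, c⟩) ^ (s:ℝ) ≤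
        ENNReal.ofReal ((2 * β ^ (-θ * (p + m : ℕ))) ^ (s:ℝ)) := by
      intro c
      rw [← ENNReal.ofReal_rpow_of_nonneg (by positivity) hs0.le]
      exact ENNReal.rpow_le_rpow (hdiam m ⟨p, c⟩) hs0.le
    refine (ENNReal.tsum_le_tsum hterm).trans ?_
    rw [tsum_fintype, Finset.sum_const, nsmul_eq_mul, ← ENNReal.ofReal_natCast,
      ← ENNReal.ofReal_mul (by positivity)]
    apply ENNReal.ofReal_le_ofReal
    simp only [a]
    generalize p + m = n
    simp only [Finset.card_univ, Fintype.card_coe]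
    have hc : ((G n).card : ℝ) ≤ (n + 1) * β ^ n := by
      calc ((G n).card : ℝ) ≤ (n + 1) * ((FullS β n).ncard : ℝ) := by exact_mod_cast hGc n
        _ ≤ _ := by gcongr; exact FullS_card_le hβ n
    have e : (2 * β ^ (-θ * (n:ℝ))) ^ (s:ℝ) = 2 ^ (s:ℝ) * β ^ (-θ * n * s) := by
      rw [Real.mul_rpow (by norm_num) (by positivity), ← Real.rpow_mul hβ0.le]
    have e2 : ρ ^ n = β ^ n * β ^ (-θ * n * s) := by
      rw [hρ, ← Real.rpow_natCast, ← Real.rpow_natCast, ← Real.rpow_mul hβ0.le,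
        ← Real.rpow_add hβ0]
      congr 1; ring
    rw [e, e2]
    calc ((G n).card : ℝ) * (2 ^ (s:ℝ) * β ^ (-θ * n * s))
        ≤ ((n + 1) * β ^ n) * (2 ^ (s:ℝ) * β ^ (-θ * n * s)) := by gcongr
      _ = _ := by ring
  refine le_antisymm ?_ bot_le
  refine hle.trans ?_
  calc _ ≤ Filter.atTop.liminf (fun m => ∑' p, ENNReal.ofReal (a (p + m))) :=
        liminf_le_liminf (Eventually.of_forall hsum)
    _ = 0 := htail.liminf_eq

lemma upper_bound {β : ℝ} (hβ : 1 < β) {φ : ℕ → ℝ} {η : ℝ}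
    (hη : Filter.atTop.liminf (fun n : ℕ => φ n / n) = η) (hη1 : 1 ≤ η) :
    dimH {x ∈ Set.Icc (0:ℝ) 1 |
        Filter.atTop.liminf (fun n : ℕ => Real.logb β |x - conv β x n| / φ n) = -1} ≤
      ENNReal.ofReal (1 / η) := by
  refine le_of_forall_gt fun c hc => ?_
  obtain ⟨s, hs1, hs2⟩ := ENNReal.lt_iff_exists_nnreal_btwn.1 hc
  refine lt_of_le_of_lt ?_ hs2
  have hs : 1 / η < s := by
    rw [← ENNReal.ofReal_coe_nnreal, ENNReal.ofReal_lt_ofReal_iff_of_nonneg (by positivity)] at hs1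
    exact hs1
  have hsub : {x ∈ Set.Icc (0:ℝ) 1 |
        Filter.atTop.liminf (fun n : ℕ => Real.logb β |x - conv β x n| / φ n) = -1} ⊆
      {x ∈ Set.Ico (0:ℝ) 1 |
        Filter.atTop.liminf (fun n : ℕ => Real.logb β |x - conv β x n| / φ n) = -1} ∪ {1} := by
    rintro x ⟨hx, hx2⟩
    rcases hx.2.eq_or_lt with h | h
    · right; exact h
    · left; exact ⟨⟨hx.1, h⟩, hx2⟩
  refine (dimH_mono hsub).trans ?_
  rw [dimH_union, dimH_singleton]
  refine max_le ?_ (by simp)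
  apply dimH_le_of_hausdorffMeasure_ne_top
  rw [upper_meas hβ hη hη1 s hs]
  exact ENNReal.zero_ne_top

/-! ### Block expansions -/

lemma pick_N {β : ℝ} (hβ : 1 < β) {σ : ℝ} (hσ0 : 0 ≤ σ) (hσ : σ < 1) :
    ∃ N M : ℕ, 1 ≤ N ∧ 1 < M ∧ β ^ (N * σ) ≤ M ∧
      ∃ e : Fin M → ℝ, Function.Injective e ∧ (∀ i, e i ∈ FullS β N) ∧ ∀ i, e i ≠ 0 := by
  have hβ0 : 0 < β := by positivity
  set ρ : ℝ := β ^ (σ - 1) with hρ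
  have hρ0 : 0 < ρ := by positivity
  have hρ1 : ρ < 1 := Real.rpow_lt_one_of_one_lt_of_neg hβ (by linarith)
  have hlim : Tendsto (fun n : ℕ => 3 * ((n:ℝ) * ρ ^ n + ρ ^ n)) atTop (nhds (3 * (0 + 0))) :=
    ((tendsto_self_mul_const_pow_of_lt_one hρ0.le hρ1).add
      (tendsto_pow_atTop_nhds_zero_of_lt_one hρ0.le hρ1)).const_mul 3
  obtain ⟨N, hN, hN1⟩ := ((hlim.eventually_lt_const (u := 1) (by norm_num)).and
    (eventually_ge_atTop 1)).exists
  have hcard := FullS_card_ge hβ N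
  set K := (FullS β N).ncard with hK
  have e1 : ρ ^ N * β ^ N = β ^ (N * σ) := by
    rw [hρ, ← Real.rpow_natCast, ← Real.rpow_natCast, ← Real.rpow_mul hβ0.le,
        ← Real.rpow_add hβ0]
    congr 1; ring
  have hone : 1 ≤ β ^ (N * σ) := Real.one_le_rpow hβ.le (by positivity)
  have hK3 : 3 * β ^ (N * σ) ≤ K := by
    have hp : 0 < β ^ N := by positivity
    have h1 : 3 * ((N + 1) * β ^ (N * σ)) ≤ β ^ N := by
      rw [← e1]
      have := mul_le_mul_of_nonneg_right hN.le hp.le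
      linarith
    have h2 : (N + 1 : ℝ) * (3 * β ^ (N * σ)) ≤ (N + 1) * K := by linarith
    exact le_of_mul_le_mul_left h2 (by positivity)
  have hK3' : 3 ≤ K := by
    have : (3:ℝ) ≤ K := by linarith
    exact_mod_cast this
  have hfin : (FullS β N \ {0}).Finite := (FullS_finite hβ N).sdiff
  have hM : (FullS β N \ {0}).ncard = K - 1 :=
    Set.ncard_sdiff_singleton_of_mem (FullS_zero_mem hβ N)
  have hM' : hfin.toFinset.card = K - 1 := by rw [← Set.ncard_eq_toFinset_card _ hfin, hM]
  let e := (hfin.toFinset.equivFinOfCardEq hM').symm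
  refine ⟨N, K - 1, hN1, by omega, ?_, fun i => (e i : ℝ), ?_, ?_, ?_⟩
  · rw [Nat.cast_sub (by omega)]
    push_cast
    linarith
  · exact Subtype.val_injective.comp e.injective
  · intro i
    have := (e i).2
    rw [Set.Finite.mem_toFinset] at this
    exact this.1
  · intro i
    have := (e i).2
    rw [Set.Finite.mem_toFinset] at this
    exact this.2

noncomputable def Xs (B : ℝ) (y : ℕ → ℝ) (i : ℕ) : ℝ := ∑' l, y (i + l) * B⁻¹ ^ l

lemma Xs_summable {B : ℝ} (hB : 1 < B) {y : ℕ → ℝ} (h0 : ∀ i, 0 ≤ y i)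
    (h1 : ∀ i, y i + 1 / B ≤ 1) (i : ℕ) : Summable fun l => y (i + l) * B⁻¹ ^ l := by
  have hBi : 0 < B⁻¹ := by positivity
  refine Summable.of_nonneg_of_le (fun l => mul_nonneg (h0 _) (by positivity)) (fun l => ?_)
    (summable_geometric_of_lt_one hBi.le (inv_lt_one_of_one_lt₀ hB))
  have : y (i + l) ≤ 1 := by have := h1 (i + l); rw [one_div] at this; linarith
  calc _ ≤ 1 * B⁻¹ ^ l := by gcongr
    _ = _ := one_mul _

lemma Xs_rec {B : ℝ} (hB : 1 < B) {y : ℕ → ℝ} (h0 : ∀ i, 0 ≤ y i)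
    (h1 : ∀ i, y i + 1 / B ≤ 1) (i : ℕ) : Xs B y i = y i + Xs B y (i + 1) / B := by
  unfold Xs
  rw [(Xs_summable hB h0 h1 i).tsum_eq_zero_add]
  simp only [add_zero, pow_zero, mul_one]
  congr 1
  rw [div_eq_mul_inv, ← tsum_mul_right]
  congr 1
  ext l
  rw [pow_succ, show i + (l + 1) = i + 1 + l by ring, mul_assoc]

lemma Xs_nonneg {B : ℝ} (hB : 1 < B) {y : ℕ → ℝ} (h0 : ∀ i, 0 ≤ y i) (i : ℕ) :
    0 ≤ Xs B y i := tsum_nonneg fun l => mul_nonneg (h0 _) (by positivity)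

lemma Xs_le_one {B : ℝ} (hB : 1 < B) {y : ℕ → ℝ} (h0 : ∀ i, 0 ≤ y i)
    (h1 : ∀ i, y i + 1 / B ≤ 1) (i : ℕ) : Xs B y i ≤ 1 := by
  have hBi : 0 < B⁻¹ := by positivity
  have hBi1 : B⁻¹ < 1 := inv_lt_one_of_one_lt₀ hB
  have hs := (summable_geometric_of_lt_one hBi.le hBi1).mul_left (1 - B⁻¹)
  have := (Xs_summable hB h0 h1 i).tsum_le_tsum (g := fun l => (1 - B⁻¹) * B⁻¹ ^ l) (fun l => by
    have := h1 (i + l); rw [one_div] at this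
    gcongr; linarith) hs
  rw [tsum_mul_left, tsum_geometric_of_lt_one hBi.le hBi1,
    mul_inv_cancel₀ (by linarith)] at this
  exact this

lemma Xs_lt_one {B : ℝ} (hB : 1 < B) {y : ℕ → ℝ} (h0 : ∀ i, 0 ≤ y i)
    (h1 : ∀ i, y i + 1 / B ≤ 1) (hz : ∀ i, ∃ l, i ≤ l ∧ y l = 0) (i : ℕ) : Xs B y i < 1 := by
  have hB0 : 0 < B := by positivity
  obtain ⟨l, hil, hl⟩ := hz i
  obtain ⟨d, rfl⟩ := Nat.exists_eq_add_of_le hil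
  clear hil
  induction d generalizing i with
  | zero =>
    rw [Xs_rec hB h0 h1, show y i = 0 from hl, zero_add, div_lt_one hB0]
    exact (Xs_le_one hB h0 h1 _).trans_lt hB
  | succ d ih =>
    have := ih (i + 1) (by rw [← hl]; congr 1; ring)
    rw [Xs_rec hB h0 h1]
    have h2 : Xs B y (i + 1) / B < 1 / B := by gcongr
    linarith [h1 i]

lemma Xs_ge {B : ℝ} (hB : 1 < B) {y : ℕ → ℝ} (h0 : ∀ i, 0 ≤ y i)
    (h1 : ∀ i, y i + 1 / B ≤ 1) (i d : ℕ) : Xs B y (i + d) / B ^ d ≤ Xs B y i := by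
  have hB0 : 0 < B := by positivity
  induction d generalizing i with
  | zero => simp
  | succ d ih =>
    rw [Xs_rec hB h0 h1 i]
    have := ih (i + 1)
    have h2 : Xs B y (i + 1 + d) / B ^ d / B ≤ Xs B y (i + 1) / B := by gcongr
    rw [show i + (d + 1) = i + 1 + d by ring, pow_succ, ← div_div]
    linarith [h0 i]

lemma Xs_zero_run {B : ℝ} (hB : 1 < B) {y : ℕ → ℝ} (h0 : ∀ i, 0 ≤ y i)
    (h1 : ∀ i, y i + 1 / B ≤ 1) (i d : ℕ) (hz : ∀ l, i ≤ l → l < i + d → y l = 0) :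
    Xs B y i = Xs B y (i + d) / B ^ d := by
  induction d generalizing i with
  | zero => simp
  | succ d ih =>
    rw [Xs_rec hB h0 h1 i, hz i le_rfl (by omega),
      ih (i + 1) (fun l h h' => hz l (by omega) (by omega)),
      show i + (d + 1) = i + 1 + d by ring, pow_succ, ← div_div, zero_add]

lemma Xs_agree {B : ℝ} (hB : 1 < B) {y z : ℕ → ℝ} (h0 : ∀ i, 0 ≤ y i)
    (h1 : ∀ i, y i + 1 / B ≤ 1) (h0' : ∀ i, 0 ≤ z i)
    (h1' : ∀ i, z i + 1 / B ≤ 1) (i d : ℕ) (hz : ∀ l, i ≤ l → l < i + d → y l = z l) :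
    Xs B y i - Xs B z i = (Xs B y (i + d) - Xs B z (i + d)) / B ^ d := by
  induction d generalizing i with
  | zero => simp
  | succ d ih =>
    rw [Xs_rec hB h0 h1 i, Xs_rec hB h0' h1' i, hz i le_rfl (by omega),
      show i + (d + 1) = i + 1 + d by ring, pow_succ, ← div_div,
      ← ih (i + 1) (fun l h h' => hz l (by omega) (by omega))]
    ring

lemma Xs_orbit {β : ℝ} (hβ : 1 < β) {N : ℕ} (hN : 1 ≤ N) {y : ℕ → ℝ}
    (hy : ∀ i, y i ∈ FullS β N) (hz : ∀ i, ∃ l, i ≤ l ∧ y l = 0) (i : ℕ) :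
    (Tb β)^[N * i] (Xs (β ^ N) y 0) = Xs (β ^ N) y i := by
  have hB : 1 < β ^ N := one_lt_pow₀ hβ (by omega)
  have h0 : ∀ i, 0 ≤ y i := fun i => (hy i).1
  have h1 : ∀ i, y i + 1 / β ^ N ≤ 1 := fun i => FullS_le hβ (hy i)
  induction i with
  | zero => simp
  | succ i ih =>
    rw [show N * (i + 1) = N + N * i by ring, Function.iterate_add_apply, ih, Xs_rec hB h0 h1 i]
    exact ((hy i).2 _ (Xs_nonneg hB h0 _) (Xs_lt_one hB h0 h1 hz _)).2

/-! ### The sparse sequence of zero runs -/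

lemma freq_mult {φ : ℕ → ℝ} (hφ : Monotone φ) {η : ℝ}
    (hη : Filter.atTop.liminf (fun n : ℕ => φ n / n) = η) (hη1 : 1 ≤ η) {N : ℕ} (hN : 1 ≤ N)
    {ε : ℝ} (hε : 0 < ε) (m : ℕ) : ∃ p, m ≤ p ∧ φ (N * p) ≤ (η + ε) * (N * p) := by
  have h := (liminf_spec hη (by positivity)).1 (η + ε / 2) (by linarith)
  set m0 := max m ⌈(η + ε / 2) / (ε / 2)⌉₊ with hm0
  obtain ⟨n, hn1, hn2⟩ := (h.and_eventually (eventually_ge_atTop (N * m0 + 1))).exists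
  have hn0 : (0:ℝ) < n := by exact_mod_cast (by omega : 0 < n)
  rw [div_lt_iff₀ hn0] at hn1
  have hp : m0 ≤ n / N := by
    rw [Nat.le_div_iff_mul_le (by omega)]
    linarith
  refine ⟨n / N, le_trans (le_max_left _ _) hp, ?_⟩
  set p := n / N with hpdef
  have h1 : N * p ≤ n := Nat.mul_div_le n N
  have h2 : n < N * p + N := by
    have := Nat.lt_mul_div_succ n (show 0 < N by omega)
    rw [hpdef]; linarith
  have h2' : (n:ℝ) ≤ N * p + N := by exact_mod_cast h2.le
  have h3 : (η + ε / 2) / (ε / 2) ≤ p := by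
    have : (⌈(η + ε / 2) / (ε / 2)⌉₊ : ℝ) ≤ p := by
      exact_mod_cast (le_max_right _ _).trans hp
    exact (Nat.le_ceil _).trans this
  rw [div_le_iff₀ (by positivity)] at h3
  have hNp : (0:ℝ) < N := by exact_mod_cast hN
  calc φ (N * p) ≤ φ n := hφ h1
    _ ≤ (η + ε / 2) * n := hn1.le
    _ ≤ (η + ε / 2) * (N * p + N) := by gcongr
    _ = (η + ε / 2) * (N * p) + N * (η + ε / 2) := by ring
    _ ≤ (η + ε / 2) * (N * p) + N * (p * (ε / 2)) := by gcongr
    _ = _ := by ring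

lemma exists_sparse {φ : ℕ → ℝ} (hφ : Monotone φ) {η : ℝ}
    (hη : Filter.atTop.liminf (fun n : ℕ => φ n / n) = η) (hη1 : 1 ≤ η) {N : ℕ} (hN : 1 ≤ N)
    {A κ : ℝ} (hA : η < A) (hκ : κ < 1) :
    ∃ p q : ℕ → ℕ, (∀ k, p k < q k) ∧ (∀ k, q k < p (k + 1)) ∧
      (∀ k, (q k : ℝ) ≤ A * p k) ∧ (∀ k, (q k : ℝ) ≤ (1 - κ) * p (k + 1)) ∧
      (∀ k, φ (N * p k) ≤ N * q k) ∧
      ∀ δ : ℝ, 0 < δ → ∀ᶠ k in atTop, (q k : ℝ) ≤ (η + δ) * p k + 1 := by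
  have hNp : (0:ℝ) < N := by exact_mod_cast hN
  set δ0 := (A - η) / 2 with hδ0
  have hδ0p : 0 < δ0 := by rw [hδ0]; linarith
  have hch : ∀ (k m : ℕ), ∃ p, m ≤ p ∧ φ (N * p) ≤ (η + min (1 / ((k:ℝ) + 1)) δ0) * (N * p) :=
    fun k m => freq_mult hφ hη hη1 hN (lt_min (by positivity) hδ0p) m
  choose f hf1 hf2 using hch
  let qf : ℕ → ℕ := fun p => max (p + 1) ⌈φ (N * p) / N⌉₊
  let m0 : ℕ := ⌈1 / δ0⌉₊
  let nxt : ℕ → ℕ := fun p => max m0 (max (qf p + 1) ⌈(qf p : ℝ) / (1 - κ)⌉₊)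
  obtain ⟨p, hp0, hps⟩ : ∃ p : ℕ → ℕ, p 0 = f 0 m0 ∧
      ∀ k, p (k + 1) = f (k + 1) (nxt (p k)) :=
    ⟨fun k => Nat.rec (f 0 m0) (fun k pk => f (k + 1) (nxt pk)) k, rfl, fun k => rfl⟩
  have hpφ : ∀ k : ℕ, φ (N * p k) ≤ (η + min (1 / ((k:ℝ) + 1)) δ0) * ((N:ℝ) * ((p k : ℕ) : ℝ)) := by
    intro k
    cases k with
    | zero => rw [hp0]; exact hf2 0 m0
    | succ k => rw [hps]; exact hf2 (k + 1) _
  have hpm : ∀ k, m0 ≤ p k := by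
    intro k
    cases k with
    | zero => rw [hp0]; exact hf1 0 m0
    | succ k => rw [hps]; exact (le_max_left _ _).trans (hf1 (k + 1) _)
  have hqle : ∀ k : ℕ, ∀ δ : ℝ, 0 < δ → min (1 / ((k:ℝ) + 1)) δ0 ≤ δ →
      (qf (p k) : ℝ) ≤ (η + δ) * p k + 1 := by
    intro k δ hδ hm
    simp only [qf]
    push_cast
    refine max_le ?_ ?_
    · have : (0:ℝ) ≤ (η - 1 + δ) * p k := by
        have : 0 ≤ η - 1 + δ := by linarith
        positivity
      linarith
    · have h1 : φ (N * p k) / N ≤ (η + δ) * p k := by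
        rw [div_le_iff₀ hNp]
        calc _ ≤ _ := hpφ k
          _ ≤ (η + δ) * (N * p k) := by gcongr
          _ = _ := by ring
      have h2 : ⌈φ (N * p k) / N⌉₊ ≤ ⌈(η + δ) * (p k : ℝ)⌉₊ := Nat.ceil_le_ceil h1
      have h3 : (⌈(η + δ) * (p k : ℝ)⌉₊ : ℝ) < (η + δ) * p k + 1 :=
        Nat.ceil_lt_add_one (by positivity)
      have h4 : (⌈φ (N * p k) / N⌉₊ : ℝ) ≤ (⌈(η + δ) * (p k : ℝ)⌉₊ : ℝ) := by exact_mod_cast h2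
      linarith
  refine ⟨p, fun k => qf (p k), ?_, ?_, ?_, ?_, ?_, ?_⟩
  · intro k
    exact Nat.lt_of_succ_le (le_max_left _ _)
  · intro k
    rw [hps]
    have := hf1 (k + 1) (nxt (p k))
    have h2 : qf (p k) + 1 ≤ nxt (p k) := (le_max_left _ _).trans (le_max_right _ _)
    exact Nat.lt_of_succ_le (h2.trans this)
  · intro k
    have h1 := hqle k δ0 hδ0p (min_le_right _ _)
    have h2 : 1 / δ0 ≤ p k := (Nat.le_ceil _).trans (by exact_mod_cast hpm k)
    rw [div_le_iff₀ hδ0p] at h2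
    have : A = η + 2 * δ0 := by rw [hδ0]; ring
    rw [this]
    linarith
  · intro k
    have h1 : (qf (p k) : ℝ) / (1 - κ) ≤ p (k + 1) := by
      have : ⌈(qf (p k) : ℝ) / (1 - κ)⌉₊ ≤ p (k + 1) := by
        rw [hps]
        exact ((le_max_right _ _).trans (le_max_right _ _)).trans (hf1 (k + 1) (nxt (p k)))
      exact (Nat.le_ceil _).trans (by exact_mod_cast this)
    rw [div_le_iff₀ (by linarith)] at h1
    linarith
  · intro k
    have h1 : φ (N * p k) / N ≤ qf (p k) :=
      (Nat.le_ceil _).trans (by exact_mod_cast le_max_right _ _)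
    rw [div_le_iff₀ hNp] at h1
    linarith
  · intro δ hδ
    have hl := tendsto_one_div_add_atTop_nhds_zero_nat (𝕜 := ℝ)
    filter_upwards [hl.eventually_lt_const hδ] with k hk
    exact hqle k δ hδ ((min_le_left _ _).trans hk.le)

/-! ### Free positions and their counting function -/

def Fr (p q : ℕ → ℕ) (i : ℕ) : Prop := ∀ k, p k ≤ i → q k ≤ i

lemma pq_mono {p q : ℕ → ℕ} (h1 : ∀ k, p k < q k) (h2 : ∀ k, q k < p (k + 1)) :
    StrictMono p ∧ StrictMono q :=
  ⟨strictMono_nat_of_lt_succ fun k => (h1 k).trans (h2 k),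
    strictMono_nat_of_lt_succ fun k => (h2 k).trans (h1 (k + 1))⟩

lemma Fr_of_between {p q : ℕ → ℕ} (h1 : ∀ k, p k < q k) (h2 : ∀ k, q k < p (k + 1)) {k i : ℕ}
    (hi : q k ≤ i) (hi' : i < p (k + 1)) : Fr p q i := by
  intro j hj
  obtain ⟨hp, hq⟩ := pq_mono h1 h2
  have : j < k + 1 := hp.lt_iff_lt.1 (hj.trans_lt hi')
  exact (hq.monotone (by omega)).trans hi

open Classical in
lemma count_run {P : ℕ → Prop} {a b : ℕ} (hab : a ≤ b) (h : ∀ i, a ≤ i → i < b → P i) :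
    Nat.count P b = Nat.count P a + (b - a) := by
  induction b, hab using Nat.le_induction with
  | base => simp
  | succ b hb ih =>
    rw [Nat.count_succ, ih (fun i h1 h2 => h i h1 (by omega)), if_pos (h b hb (by omega))]
    omega

open Classical in
lemma count_bound {p q : ℕ → ℕ} (h1 : ∀ k, p k < q k) (h2 : ∀ k, q k < p (k + 1))
    {A κ A' : ℝ} (hqA : ∀ k, (q k : ℝ) ≤ A * p k) (hqκ : ∀ k, (q k : ℝ) ≤ (1 - κ) * p (k + 1))
    (hA' : 1 ≤ A') (hAA : A' * κ = A) (hκ1 : κ ≤ 1) (m : ℕ) :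
    (m : ℝ) ≤ A' * Nat.count (Fr p q) m := by
  obtain ⟨hp, hq⟩ := pq_mono h1 h2
  have key : ∀ k, (∀ m, m ≤ p k → (m : ℝ) ≤ A' * Nat.count (Fr p q) m) ∧
      κ * p k ≤ Nat.count (Fr p q) (p k) := by
    intro k
    induction k with
    | zero =>
      have hc : ∀ m, m ≤ p 0 → Nat.count (Fr p q) m = m := by
        intro m hm
        rw [count_run (Nat.zero_le m)]
        · simp
        · intro i _ hi k hk
          have := hp.monotone (Nat.zero_le k)
          omega
      refine ⟨fun m hm => ?_, ?_⟩
      · rw [hc m hm]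
        have : (0:ℝ) ≤ m := by positivity
        nlinarith
      · rw [hc _ le_rfl]
        have : (0:ℝ) ≤ p 0 := by positivity
        nlinarith
    | succ k ih =>
      have hmid : ∀ m, m ≤ q k → (m : ℝ) ≤ A' * Nat.count (Fr p q) m := by
        intro m hm
        rcases le_or_gt m (p k) with h | h
        · exact ih.1 m h
        · have hcm : (Nat.count (Fr p q) (p k) : ℝ) ≤ Nat.count (Fr p q) m := by
            exact_mod_cast Nat.count_monotone _ h.le
          calc (m : ℝ) ≤ q k := by exact_mod_cast hm
            _ ≤ A * p k := hqA k
            _ = A' * (κ * p k) := by rw [← hAA]; ring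
            _ ≤ A' * Nat.count (Fr p q) m := by
              have := ih.2.trans hcm
              gcongr
      have hend : ∀ m, q k ≤ m → m ≤ p (k + 1) →
          (Nat.count (Fr p q) m : ℝ) = Nat.count (Fr p q) (q k) + (m - q k) := by
        intro m hm hm'
        rw [count_run hm (fun i hi hi' => Fr_of_between h1 h2 hi (by omega))]
        push_cast [Nat.cast_sub hm]
        ring
      refine ⟨fun m hm => ?_, ?_⟩
      · rcases le_or_gt m (q k) with h | h
        · exact hmid m h
        · rw [hend m h.le hm]
          have h3 := hmid (q k) le_rfl
          have h4 : (0:ℝ) ≤ m - q k := by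
            have : (q k : ℝ) ≤ m := by exact_mod_cast h.le
            linarith
          nlinarith
      · rw [hend _ (h2 k).le le_rfl]
        have h3 : (0:ℝ) ≤ Nat.count (Fr p q) (q k) := by positivity
        have h4 := hqκ k
        linarith
  exact (key m).1 m hp.le_apply

/-! ### Digit sequences -/

open Classical in
noncomputable def yseq (p q : ℕ → ℕ) {M : ℕ} (e : Fin M → ℝ) (a : ℕ → Fin M) (i : ℕ) : ℝ :=
  if Fr p q i then e (a (Nat.count (Fr p q) i)) else 0

lemma yseq_mem {β : ℝ} (hβ : 1 < β) {N : ℕ} (p q : ℕ → ℕ) {M : ℕ} {e : Fin M → ℝ}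
    (he : ∀ i, e i ∈ FullS β N) (a : ℕ → Fin M) (i : ℕ) : yseq p q e a i ∈ FullS β N := by
  unfold yseq
  split_ifs
  · exact he _
  · exact FullS_zero_mem hβ N

open Classical in
lemma yseq_ge {β : ℝ} (hβ : 1 < β) {N : ℕ} {p q : ℕ → ℕ} {M : ℕ} {e : Fin M → ℝ}
    (he : ∀ i, e i ∈ FullS β N) (he0 : ∀ i, e i ≠ 0) (a : ℕ → Fin M) {i : ℕ} (hi : Fr p q i) :
    1 / β ^ N ≤ yseq p q e a i := by
  unfold yseq
  rw [if_pos hi]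
  have h := FullS_sep hβ (FullS_zero_mem hβ N) (he (a (Nat.count (Fr p q) i)))
    (lt_of_le_of_ne (he _).1 (he0 _).symm)
  simpa using h

lemma yseq_zero {p q : ℕ → ℕ} {M : ℕ} {e : Fin M → ℝ} (a : ℕ → Fin M) {i k : ℕ}
    (h : p k ≤ i) (h' : i < q k) : yseq p q e a i = 0 := by
  unfold yseq
  rw [if_neg]
  intro hF
  have := hF k h
  omega

lemma yseq_zero_inf {p q : ℕ → ℕ} (h1 : ∀ k, p k < q k) (h2 : ∀ k, q k < p (k + 1)) {M : ℕ}
    {e : Fin M → ℝ} (a : ℕ → Fin M) (i : ℕ) : ∃ l, i ≤ l ∧ yseq p q e a l = 0 :=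
  ⟨p i, (pq_mono h1 h2).1.le_apply, yseq_zero a le_rfl (h1 i)⟩

/-- The constructed points belong to the set. -/
lemma point_mem {β : ℝ} (hβ : 1 < β) {φ : ℕ → ℝ} {η : ℝ}
    (hη : Filter.atTop.liminf (fun n : ℕ => φ n / n) = η) (hη1 : 1 ≤ η) {N : ℕ} (hN : 1 ≤ N)
    {p q : ℕ → ℕ} (h1 : ∀ k, p k < q k) (h2 : ∀ k, q k < p (k + 1))
    (hφq : ∀ k, φ (N * p k) ≤ N * q k)
    (hlim : ∀ δ : ℝ, 0 < δ → ∀ᶠ k in atTop, (q k : ℝ) ≤ (η + δ) * p k + 1)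
    {M : ℕ} {e : Fin M → ℝ}
    (he : ∀ i, e i ∈ FullS β N) (he0 : ∀ i, e i ≠ 0) (a : ℕ → Fin M) :
    Xs (β ^ N) (yseq p q e a) 0 ∈ {x ∈ Set.Icc (0:ℝ) 1 |
        Filter.atTop.liminf (fun n : ℕ => Real.logb β |x - conv β x n| / φ n) = -1} := by
  have hβ0 : 0 < β := by positivity
  have hB : 1 < β ^ N := one_lt_pow₀ hβ (by omega)
  obtain ⟨hp, hq⟩ := pq_mono h1 h2
  set y := yseq p q e a with hy
  have hyF : ∀ i, y i ∈ FullS β N := yseq_mem hβ p q he a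
  have hy0 : ∀ i, 0 ≤ y i := fun i => (hyF i).1
  have hy1 : ∀ i, y i + 1 / β ^ N ≤ 1 := fun i => FullS_le hβ (hyF i)
  have hyz : ∀ i, ∃ l, i ≤ l ∧ y l = 0 := yseq_zero_inf h1 h2 a
  have horb := Xs_orbit hβ hN hyF hyz
  set x := Xs (β ^ N) y 0 with hx
  have hx0 : 0 ≤ x := Xs_nonneg hB hy0 0
  have hx1 : x < 1 := Xs_lt_one hB hy0 hy1 hyz 0
  have hNp : (0:ℝ) < N := by exact_mod_cast hN
  -- lower bound for the distance to the convergent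
  have hlow : ∀ n i, Fr p q i → n ≤ N * i →
      0 < |x - conv β x n| ∧ -((N:ℝ) * i + N) ≤ Real.logb β |x - conv β x n| := by
    intro n i hi hn
    have hT0 := Tb_it_nonneg β hx0 n
    have hXi : 1 / β ^ N ≤ Xs (β ^ N) y i := by
      rw [Xs_rec hB hy0 hy1 i]
      have h3 := yseq_ge hβ he he0 a hi
      have h4 := Xs_nonneg hB hy0 (i + 1)
      have : 0 ≤ Xs (β ^ N) y (i + 1) / β ^ N := by positivity
      linarith
    have h5 : Xs (β ^ N) y i ≤ β ^ (N * i - n) * (Tb β)^[n] x := by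
      rw [← horb i]
      have := Tb_it_le_pow hβ hT0 (N * i - n)
      rwa [← Function.iterate_add_apply, Nat.sub_add_cancel hn] at this
    have h6 : β ^ (-((N:ℝ) * i + N)) ≤ |x - conv β x n| := by
      rw [sub_conv hβ, abs_of_nonneg (by positivity), le_div_iff₀ (by positivity)]
      have h7 : 1 / β ^ N / β ^ (N * i - n) ≤ (Tb β)^[n] x := by
        rw [div_le_iff₀ (by positivity)]
        linarith
      refine le_trans (le_of_eq ?_) h7
      rw [div_div, ← pow_add, one_div, Real.rpow_neg hβ0.le, inv_mul_eq_div]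
      have e1 : (N:ℝ) * i + N = ((N + (N * i - n) + n : ℕ) : ℝ) := by
        rw [show N + (N * i - n) + n = N + N * i by omega]
        push_cast; ring
      rw [e1, Real.rpow_natCast, pow_add _ (N + (N * i - n)) n]
      field_simp
    have hpos : 0 < |x - conv β x n| := lt_of_lt_of_le (by positivity) h6
    exact ⟨hpos, (Real.le_logb_iff_rpow_le hβ hpos).2 h6⟩
  have hφev : ∀ η1, η1 < η → ∀ᶠ n : ℕ in atTop, η1 * n < φ n := by
    intro η1 hlt
    filter_upwards [(liminf_spec hη (by positivity)).2 η1 hlt, eventually_gt_atTop 0] with n hn hn0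
    have : (0:ℝ) < n := by exact_mod_cast hn0
    rwa [lt_div_iff₀ this] at hn
  have hqFr : ∀ k, Fr p q (q k) := fun k => Fr_of_between h1 h2 le_rfl (h2 k)
  refine ⟨⟨hx0, hx1.le⟩, liminf_eq_of_spec ?_ ?_⟩
  · -- along the sequence `N * p k`
    have hev : ∀ᶠ k in atTop, Real.logb β |x - conv β x (N * p k)| / φ (N * p k) ≤ -1 := by
      have htend : Tendsto (fun k => N * p k) atTop atTop :=
        tendsto_atTop_mono (fun k => by
          calc k ≤ p k := hp.le_apply
            _ ≤ N * p k := Nat.le_mul_of_pos_left _ (by omega)) tendsto_id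
      filter_upwards [htend.eventually (hφev 0 (by linarith))] with k hk
      rw [zero_mul] at hk
      rw [div_le_iff₀ hk]
      have hle := (hlow (N * p k) (q k) (hqFr k) (Nat.mul_le_mul_left N (h1 k).le)).1
      have h3 : |x - conv β x (N * p k)| ≤ β ^ (-((N:ℝ) * q k)) := by
        obtain ⟨d, hd⟩ := Nat.exists_eq_add_of_lt (h1 k)
        have hX := Xs_zero_run hB hy0 hy1 (p k) (d + 1)
          (fun l hl hl' => yseq_zero (k := k) a hl (by omega))
        have hXn := Xs_nonneg hB hy0 (p k + (d + 1))
        have hX1 := Xs_lt_one hB hy0 hy1 hyz (p k + (d + 1))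
        rw [sub_conv hβ, horb, hX, abs_of_nonneg (by positivity), Real.rpow_neg hβ0.le]
        have e1 : (N:ℝ) * q k = ((N * (d + 1) + N * p k : ℕ) : ℝ) := by
          rw [hd]; push_cast; ring
        rw [e1, Real.rpow_natCast, div_div, ← pow_mul, ← pow_add, div_eq_mul_inv]
        exact mul_le_of_le_one_left (by positivity) hX1.le
      have h4 : Real.logb β |x - conv β x (N * p k)| ≤ -((N:ℝ) * q k) :=
        (Real.logb_le_iff_le_rpow hβ hle).2 h3
      linarith [hφq k]
    have hfr : ∃ᶠ k in atTop, Real.logb β |x - conv β x (N * p k)| / φ (N * p k) ≤ -1 :=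
      hev.frequently
    have htend : Tendsto (fun k => N * p k) atTop atTop :=
      tendsto_atTop_mono (fun k => by
        calc k ≤ p k := hp.le_apply
          _ ≤ N * p k := Nat.le_mul_of_pos_left _ (by omega)) tendsto_id
    exact htend.frequently hfr
  · intro b hb
    obtain ⟨δ, hδ, rfl⟩ : ∃ δ, 0 < δ ∧ b = -(1 + δ) := ⟨-b - 1, by linarith, by ring⟩
    set δ' := δ / (3 + δ) with hδ'
    have hδ'0 : 0 < δ' := by positivity
    have hδ'1 : δ' * (3 + δ) = δ := by rw [hδ']; field_simp
    have hδ'lt : δ' < 1 := by rw [hδ', div_lt_one (by positivity)]; linarith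
    obtain ⟨k0, hk0⟩ := eventually_atTop.1 (hlim δ' hδ'0)
    -- the constant absorbed by large n
    obtain ⟨n1, hn1⟩ := exists_nat_ge (((η + δ') * N + 3 * N) / δ')
    filter_upwards [hφev (η - δ') (by linarith), eventually_ge_atTop n1,
      eventually_ge_atTop (N * q k0 + 1)] with n hφn hnn1 hnk0
    have hnpos : (0:ℝ) < n := by exact_mod_cast (by omega : 0 < n)
    have hconst : (η + δ') * N + 3 * N ≤ δ' * n := by
      have h3 : ((η + δ') * N + 3 * N) / δ' ≤ n := hn1.trans (by exact_mod_cast hnn1)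
      rw [div_le_iff₀ hδ'0] at h3
      linarith
    have hφpos : 0 < φ n := by
      have : 0 < (η - δ') * n := mul_pos (by linarith) hnpos
      linarith
    rw [le_div_iff₀ hφpos]
    have hmain : -((η + 2 * δ') * n) ≤ Real.logb β |x - conv β x n| := by
      set i := n / N with hi
      have hin : N * i ≤ n := Nat.mul_div_le n N
      have hni : n < N * (i + 1) := Nat.lt_mul_div_succ n (by omega)
      have hin' : (N:ℝ) * i ≤ n := by exact_mod_cast hin
      by_cases hF : Fr p q (i + 1)
      · have h3 := (hlow n (i + 1) hF hni.le).2
        push_cast at h3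
        have h4 : (n:ℝ) ≤ η * n := by nlinarith
        have h5 : 0 ≤ (η + δ') * N := by positivity
        nlinarith
      · unfold Fr at hF
        push Not at hF
        obtain ⟨k, hk1, hk2⟩ := hF
        have hnq : n ≤ N * q k := by
          have := Nat.mul_le_mul_left N hk2.le
          omega
        have hk : k0 ≤ k := by
          by_contra! hlt
          have := Nat.mul_le_mul_left N (hq hlt).le
          omega
        have h3 := (hlow n (q k) (hqFr k) hnq).2
        have h4 := hk0 k hk
        have h5 : (p k : ℝ) ≤ i + 1 := by exact_mod_cast hk1
        have h6 : (N:ℝ) * q k ≤ (η + δ') * (n + N) + N := by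
          calc (N:ℝ) * q k ≤ N * ((η + δ') * p k + 1) := by gcongr
            _ ≤ N * ((η + δ') * (i + 1) + 1) := by gcongr
            _ = (η + δ') * (N * i + N) + N := by ring
            _ ≤ (η + δ') * (n + N) + N := by gcongr
        nlinarith
    have hfin : (η + 2 * δ') * n ≤ (1 + δ) * φ n := by
      have h3 : η + 2 * δ' ≤ (1 + δ) * (η - δ') := by nlinarith
      calc (η + 2 * δ') * n ≤ (1 + δ) * (η - δ') * n := by gcongr
        _ = (1 + δ) * ((η - δ') * n) := by ring
        _ ≤ _ := by gcongr
    linarith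

/-! Separation of the constructed points. -/

open Classical in
lemma point_sep' {β : ℝ} (hβ : 1 < β) {N : ℕ} (hN : 1 ≤ N)
    {p q : ℕ → ℕ} (h1 : ∀ k, p k < q k) (h2 : ∀ k, q k < p (k + 1)) {A' : ℝ}
    (hcount : ∀ m : ℕ, (m : ℝ) ≤ A' * Nat.count (Fr p q) m)
    {M : ℕ} {e : Fin M → ℝ} (hinj : Function.Injective e)
    (he : ∀ i, e i ∈ FullS β N) (he0 : ∀ i, e i ≠ 0) (a b : ℕ → Fin M) (j : ℕ)
    (hagree : ∀ l, l < j → a l = b l) (hne : a j ≠ b j) :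
    (β ^ N) ^ (-(A' * (j + 2))) ≤
      |Xs (β ^ N) (yseq p q e a) 0 - Xs (β ^ N) (yseq p q e b) 0| := by
  have hβ0 : 0 < β := by positivity
  have hB : 1 < β ^ N := one_lt_pow₀ hβ (by omega)
  have hinf : (Set.ofPred (Fr p q)).Infinite := by
    refine Set.infinite_of_injective_forall_mem (f := q) (pq_mono h1 h2).2.injective fun k => ?_
    exact Fr_of_between h1 h2 le_rfl (h2 k)
  set i := Nat.nth (Fr p q) j with hi
  set i' := Nat.nth (Fr p q) (j + 1) with hi'
  have hFi : Fr p q i := Nat.nth_mem_of_infinite hinf j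
  have hFi' : Fr p q i' := Nat.nth_mem_of_infinite hinf (j + 1)
  have hci : Nat.count (Fr p q) i = j := Nat.count_nth_of_infinite hinf j
  have hci' : Nat.count (Fr p q) i' = j + 1 := Nat.count_nth_of_infinite hinf (j + 1)
  have hii' : i < i' := Nat.nth_strictMono hinf (Nat.lt_succ_self j)
  have hi'le : (i' + 1 : ℝ) ≤ A' * (j + 2) := by
    have := hcount (i' + 1)
    rw [Nat.count_succ, if_pos hFi', hci'] at this
    push_cast at this
    linarith
  have key : ∀ a b : ℕ → Fin M, (∀ l, l < j → a l = b l) → e (a j) < e (b j) →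
      (β ^ N) ^ (-(A' * (j + 2))) ≤
        |Xs (β ^ N) (yseq p q e a) 0 - Xs (β ^ N) (yseq p q e b) 0| := by
    intro a b hag hlt
    have hyF : ∀ i, yseq p q e a i ∈ FullS β N := yseq_mem hβ p q he a
    have hy0 : ∀ i, 0 ≤ yseq p q e a i := fun i => (hyF i).1
    have hy1 : ∀ i, yseq p q e a i + 1 / β ^ N ≤ 1 := fun i => FullS_le hβ (hyF i)
    have hzF : ∀ i, yseq p q e b i ∈ FullS β N := yseq_mem hβ p q he b
    have hz0 : ∀ i, 0 ≤ yseq p q e b i := fun i => (hzF i).1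
    have hz1 : ∀ i, yseq p q e b i + 1 / β ^ N ≤ 1 := fun i => FullS_le hβ (hzF i)
    have hag' := Xs_agree hB hy0 hy1 hz0 hz1 0 i (fun l _ hl => by
      unfold yseq
      split_ifs with hF
      · rw [hag]
        rw [← hci]
        exact Nat.count_strict_mono hF (by omega)
      · rfl)
    rw [zero_add] at hag'
    have hya : yseq p q e a i = e (a j) := by unfold yseq; rw [if_pos hFi, hci]
    have hyb : yseq p q e b i = e (b j) := by unfold yseq; rw [if_pos hFi, hci]
    obtain ⟨d, hd⟩ := Nat.exists_eq_add_of_lt hii'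
    have hge := Xs_ge hB hz0 hz1 (i + 1) d
    have hXi' : 1 / β ^ N ≤ Xs (β ^ N) (yseq p q e b) i' := by
      rw [Xs_rec hB hz0 hz1 i']
      have h3 := yseq_ge hβ he he0 b hFi'
      have h4 := Xs_nonneg hB hz0 (i' + 1)
      have : 0 ≤ Xs (β ^ N) (yseq p q e b) (i' + 1) / β ^ N := by positivity
      linarith
    rw [show i + 1 + d = i' by omega] at hge
    have hsep := FullS_sep hβ (he (a j)) (he (b j)) hlt
    have hXa1 := Xs_le_one hB hy0 hy1 (i + 1)
    have hXa1' : Xs (β ^ N) (yseq p q e a) (i + 1) / β ^ N ≤ 1 / β ^ N := by gcongr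
    have hXb : 1 / β ^ N / (β ^ N) ^ d / β ^ N ≤ Xs (β ^ N) (yseq p q e b) (i + 1) / β ^ N := by
      gcongr
      refine le_trans ?_ hge
      gcongr
    have hdiff : 1 / β ^ N / (β ^ N) ^ d / β ^ N ≤
        Xs (β ^ N) (yseq p q e b) i - Xs (β ^ N) (yseq p q e a) i := by
      rw [Xs_rec hB hy0 hy1 i, Xs_rec hB hz0 hz1 i, hya, hyb]
      linarith
    rw [hag', abs_div, abs_sub_comm, abs_of_pos (show 0 < (β ^ N) ^ i by positivity)]
    have hfin : 1 / β ^ N / (β ^ N) ^ d / β ^ N / (β ^ N) ^ i ≤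
        |Xs (β ^ N) (yseq p q e b) i - Xs (β ^ N) (yseq p q e a) i| / (β ^ N) ^ i := by
      gcongr
      exact hdiff.trans (le_abs_self _)
    refine le_trans ?_ hfin
    have e1 : 1 / β ^ N / (β ^ N) ^ d / β ^ N / (β ^ N) ^ i = (β ^ N) ^ (-((i' + 1 : ℕ) : ℝ)) := by
      rw [Real.rpow_neg (by positivity), Real.rpow_natCast, hd,
        show i + d + 1 + 1 = 1 + d + 1 + i by ring, pow_add, pow_add, pow_add]
      field_simp
    rw [e1]
    apply Real.rpow_le_rpow_of_exponent_le hB.le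
    push_cast
    linarith
  rcases lt_or_gt_of_ne (fun h => hne (hinj h) : e (a j) ≠ e (b j)) with h | h
  · exact key a b hagree h
  · rw [abs_sub_comm]
    exact key b a (fun l hl => (hagree l hl).symm) h

lemma lower_bound_aux {β : ℝ} (hβ : 1 < β) {φ : ℕ → ℝ} (hφ : Monotone φ) {η : ℝ}
    (hη : Filter.atTop.liminf (fun n : ℕ => φ n / n) = η) (hη1 : 1 ≤ η) (r : NNReal)
    (hr0 : 0 < r) (hr : (r : ℝ) < 1 / η) :
    (r : ENNReal) ≤ dimH {x ∈ Set.Icc (0:ℝ) 1 |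
        Filter.atTop.liminf (fun n : ℕ => Real.logb β |x - conv β x n| / φ n) = -1} := by
  classical
  have hβ0 : 0 < β := by positivity
  have hr0' : (0:ℝ) < r := by exact_mod_cast hr0
  obtain ⟨A', hA1, hA2⟩ := exists_between (show η < 1 / (r:ℝ) by
    rw [lt_div_iff₀ hr0']; rw [lt_div_iff₀ (by positivity)] at hr; linarith)
  obtain ⟨A, hA3, hA4⟩ := exists_between hA1
  have hA'0 : 0 < A' := by linarith
  have hσ : r * A' < 1 := by rw [lt_div_iff₀ hr0'] at hA2; linarith
  obtain ⟨N, M, hN, hM, hMβ, e, hinj, he, he0⟩ := pick_N hβ (σ := r * A') (by positivity) hσ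
  have hκ : A / A' < 1 := by rwa [div_lt_one hA'0]
  obtain ⟨p, q, h1, h2, hqA, hqκ, hφq, hlim⟩ := exists_sparse hφ hη hη1 hN hA3 hκ
  have hcount := count_bound h1 h2 hqA hqκ (A' := A') (by linarith)
    (by field_simp) hκ.le
  have hB : 1 < β ^ N := one_lt_pow₀ hβ (by omega)
  have hB0 : 0 < β ^ N := by positivity
  let g : (ℕ → Fin M) → ℝ := fun a => Xs (β ^ N) (yseq p q e a) 0
  have hM0 : (0:ℝ) < M := by exact_mod_cast (by omega : 0 < M)
  let C : NNReal := ⟨(β ^ N) ^ (2 * (r * A')), by positivity⟩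
  have hkey : ∀ a b, a ≠ b → 0 < |g a - g b| ∧
      |Real.ofDigits a - Real.ofDigits b| ≤ C * |g a - g b| ^ (r:ℝ) := by
    intro a b hab
    have hex : ∃ j, a j ≠ b j := Function.ne_iff.1 hab
    set j := Nat.find hex with hj
    have hne : a j ≠ b j := Nat.find_spec hex
    have hag : ∀ l, l < j → a l = b l := fun l hl => by
      have := Nat.find_min hex hl
      exact not_not.1 this
    have hsep := point_sep' hβ hN h1 h2 hcount hinj he he0 a b j hag hne
    have hdig := Real.abs_ofDigits_sub_ofDigits_le hag
    refine ⟨lt_of_lt_of_le (by positivity) hsep, hdig.trans ?_⟩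
    have h3 : ((β ^ N) ^ (-(A' * (j + 2)))) ^ (r:ℝ) ≤ |g a - g b| ^ (r:ℝ) :=
      Real.rpow_le_rpow (by positivity) hsep hr0'.le
    have h4 : (β ^ N : ℝ) ^ (r * A') ≤ M := by
      rw [← Real.rpow_natCast, ← Real.rpow_mul hβ0.le]
      exact hMβ
    have h5 : ((M:ℝ) ^ j)⁻¹ ≤ (((β ^ N : ℝ) ^ (r * A')) ^ j)⁻¹ := by gcongr
    refine h5.trans (le_trans (le_of_eq ?_) (mul_le_mul_of_nonneg_left h3 C.2))
    change _ = (β ^ N) ^ (2 * (r * A')) * _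
    rw [← Real.rpow_natCast _ j, ← Real.rpow_mul hB0.le, ← Real.rpow_neg hB0.le,
      ← Real.rpow_mul hB0.le, ← Real.rpow_add hB0]
    congr 1
    ring
  have hginj : Function.Injective g := by
    intro a b hab
    by_contra hne
    have := (hkey a b hne).1
    rw [hab, sub_self, abs_zero] at this
    exact lt_irrefl _ this
  have : Nonempty (ℕ → Fin M) := ⟨fun _ => ⟨0, by omega⟩⟩
  let F : ℝ → ℝ := fun x => Real.ofDigits (Function.invFun g x)
  have hFg : ∀ a, F (g a) = Real.ofDigits a := fun a => by
    simp only [F]; rw [Function.leftInverse_invFun hginj a]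
  have hH : HolderOnWith C r F (Set.range g) := by
    rintro _ ⟨a, rfl⟩ _ ⟨b, rfl⟩
    rw [hFg, hFg]
    by_cases hab : a = b
    · subst hab; simp
    · obtain ⟨h3, h4⟩ := hkey a b hab
      rw [edist_dist, edist_dist, Real.dist_eq, Real.dist_eq,
        ENNReal.ofReal_rpow_of_nonneg h3.le hr0'.le, ← ENNReal.ofReal_coe_nnreal,
        ← ENNReal.ofReal_mul (NNReal.coe_nonneg C)]
      exact ENNReal.ofReal_le_ofReal h4
  have hdim := hH.dimH_image_le hr0
  have hsurj : Set.Icc (0:ℝ) 1 ⊆ F '' Set.range g := by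
    intro z hz
    obtain ⟨a, -, ha⟩ := Real.ofDigits_SurjOn hM hz
    exact ⟨g a, ⟨a, rfl⟩, by rw [hFg, ha]⟩
  have hone : (1 : ENNReal) ≤ dimH (F '' Set.range g) := by
    refine le_trans (le_of_eq ?_) (dimH_mono hsurj)
    rw [Real.dimH_of_nonempty_interior (by rw [interior_Icc]; exact ⟨1/2, by norm_num, by norm_num⟩)]
    simp
  have hr1 : (r : ENNReal) ≤ dimH (Set.range g) := by
    have h3 := hone.trans hdim
    have h4 := ENNReal.mul_le_of_le_div h3
    rwa [one_mul] at h4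
  refine hr1.trans (dimH_mono ?_)
  rintro _ ⟨a, rfl⟩
  exact point_mem hβ hη hη1 hN h1 h2 hφq hlim he he0 a

/-- Hausdorff dimension of the set where liminf (1/φ(n)) log_β |x − ω_n(x)| = −1. -/
theorem stmt7 (β : ℝ) (hβ : 1 < β) (φ : ℕ → ℝ) (hφ : Monotone φ) (η : ℝ)
    (hη : Filter.atTop.liminf (fun n : ℕ => φ n / n) = η) (hη1 : 1 ≤ η) :
    dimH {x ∈ Set.Icc (0:ℝ) 1 |
        Filter.atTop.liminf (fun n : ℕ => Real.logb β |x - conv β x n| / φ n) = -1} =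
      ENNReal.ofReal (1 / η) := by
  refine le_antisymm (upper_bound hβ hη hη1) ?_
  refine le_of_forall_lt fun c hc => ?_
  obtain ⟨r, hr1, hr2⟩ := ENNReal.lt_iff_exists_nnreal_btwn.1 hc
  refine lt_of_lt_of_le hr1 ?_
  have hr : (r : ℝ) < 1 / η := by
    rw [← ENNReal.ofReal_coe_nnreal, ENNReal.ofReal_lt_ofReal_iff_of_nonneg (NNReal.coe_nonneg r)] at hr2
    exact hr2
  have hr0 : 0 < r := by
    have h : (0:ENNReal) < r := lt_of_le_of_lt (zero_le) hr1
    exact ENNReal.coe_pos.1 h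
  exact lower_bound_aux hβ hφ hη hη1 r hr0 hr
end

section
/- The set L × L, where L is the set of Liouville numbers, has Hausdorff dimension 1, even though L itself has Hausdorff dimension 0. -/
open Filter MeasureTheory Set

/-- The set of Liouville numbers, defined via the distance to the nearest integer. -/
def Lset : Set ℝ :=
  {x : ℝ | ∀ v : ℝ, 1 < v →
    ∃ᶠ q : ℕ in Filter.atTop, |(q : ℝ) * x - round ((q : ℝ) * x)| < (q : ℝ) ^ (-v)}

/-- A Hausdorff-Cantelli lemma for coverings by balls of radius `q ^ (-k)`. -/
theorem hausdorff_cantelli {X β : Type*} [MetricSpace X] [MeasurableSpace X] [BorelSpace X]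
    (s : Set X) (J : ℕ → Finset β) (c : ℕ → β → X) (C d : ℝ) (a k : ℕ) (hd : 0 < d) (hC : 0 ≤ C)
    (hk : 0 < k)
    (hcard : ∀ q : ℕ, 1 ≤ q → ((J q).card : ℝ) ≤ C * (q : ℝ) ^ a)
    (hkd : (a : ℝ) + 1 < k * d)
    (hs : ∀ x ∈ s, ∃ᶠ q : ℕ in atTop, ∃ j ∈ J q, dist x (c q j) ≤ 1 / (q : ℝ) ^ k) :
    Measure.hausdorffMeasure d s = 0 := by
  set g : ℕ → ENNReal := fun q => ENNReal.ofReal (C * 2 ^ d * (q : ℝ) ^ ((a : ℝ) - k * d)) with hg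
  have hsum : ∑' q, g q ≠ ⊤ := by
    have h1 : Summable (fun q : ℕ => C * 2 ^ d * (q : ℝ) ^ ((a : ℝ) - k * d)) :=
      (Real.summable_nat_rpow.2 (by linarith)).mul_left _
    exact h1.tsum_ofReal_ne_top
  have htail := ENNReal.tendsto_sum_nat_add g hsum
  have key := Measure.hausdorffMeasure_le_liminf_tsum (ι := fun N : ℕ => Σ i : ℕ, J (i + N))
    d s (l := atTop) (fun N : ℕ => ENNReal.ofReal (2 * (1 / (N : ℝ) ^ k))) ?_
    (fun N p => Metric.closedBall (c (p.1 + N) p.2) (1 / ((p.1 + N : ℕ) : ℝ) ^ k)) ?_ ?_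
  · refine le_antisymm (key.trans ?_) bot_le
    rw [← htail.liminf_eq]
    refine liminf_le_liminf ?_
    filter_upwards [eventually_ge_atTop 1] with N hN
    rw [ENNReal.tsum_sigma']
    refine ENNReal.tsum_le_tsum fun i => ?_
    have hq : 1 ≤ i + N := by omega
    dsimp only
    generalize i + N = q at hq ⊢
    have hq0 : (0 : ℝ) < q := by exact_mod_cast hq
    calc ∑' b : J q, Metric.ediam (Metric.closedBall (c q b) (1 / (q : ℝ) ^ k)) ^ d
        ≤ ∑' b : J q, ENNReal.ofReal ((2 * (1 / (q : ℝ) ^ k)) ^ d) := by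
          refine ENNReal.tsum_le_tsum fun b => ?_
          rw [← ENNReal.ofReal_rpow_of_nonneg (by positivity) hd.le]
          refine ENNReal.rpow_le_rpow ?_ hd.le
          refine Metric.ediam_le_of_forall_dist_le fun x hx y hy => ?_
          have := dist_triangle_right x y (c q b)
          rw [Metric.mem_closedBall] at hx hy
          linarith
      _ = ENNReal.ofReal ((J q).card * (2 * (1 / (q : ℝ) ^ k)) ^ d) := by
          rw [tsum_fintype]
          simp [ENNReal.ofReal_mul]
      _ ≤ g q := by
          refine ENNReal.ofReal_le_ofReal ?_
          have e : (2 * (1 / (q : ℝ) ^ k)) ^ d = 2 ^ d * (q : ℝ) ^ (-(k * d)) := by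
            rw [Real.mul_rpow (by norm_num) (by positivity), one_div, ← Real.rpow_natCast,
              ← Real.rpow_neg hq0.le, ← Real.rpow_mul hq0.le]
            ring_nf
          rw [e, sub_eq_add_neg, Real.rpow_add hq0, Real.rpow_natCast]
          have := hcard q hq
          calc _ ≤ C * (q : ℝ) ^ a * (2 ^ d * (q : ℝ) ^ (-(k * d))) := by gcongr
            _ = _ := by ring
  · rw [← ENNReal.ofReal_zero]
    refine ENNReal.tendsto_ofReal ?_
    have h1 : Tendsto (fun N : ℕ => ((N : ℝ) ^ k)) atTop atTop :=
      (tendsto_pow_atTop hk.ne').comp tendsto_natCast_atTop_atTop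
    have := (tendsto_inv_atTop_zero.comp h1).const_mul 2
    simpa using this
  · filter_upwards [eventually_ge_atTop 1] with N hN
    rintro ⟨i, b⟩
    refine Metric.ediam_le_of_forall_dist_le fun x hx y hy => ?_
    have h3 := dist_triangle_right x y (c (i + N) b)
    rw [Metric.mem_closedBall] at hx hy
    have hN0 : (0 : ℝ) < N := by exact_mod_cast hN
    have h4 : 1 / ((i + N : ℕ) : ℝ) ^ k ≤ 1 / (N : ℝ) ^ k := by
      gcongr
      omega
    simp only at hx hy
    linarith
  · refine Eventually.of_forall fun N x hx => ?_
    obtain ⟨q, hqN, j, hj, hd⟩ := frequently_atTop.1 (hs x hx) N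
    obtain ⟨i, rfl⟩ := Nat.exists_eq_add_of_le' hqN
    exact mem_iUnion.2 ⟨⟨i, j, hj⟩, hd⟩

theorem abs_round_le_aux (n Q : ℕ) (x : ℝ) (hx : |x| ≤ n) :
    round ((Q : ℝ) * x) ∈ Finset.Icc (-((n * Q + 1 : ℕ) : ℤ)) ((n * Q + 1 : ℕ) : ℤ) := by
  have h1 := abs_sub_round ((Q : ℝ) * x)
  have h2 : |(Q : ℝ) * x| ≤ n * Q := by
    rw [abs_mul, Nat.abs_cast, mul_comm]; gcongr
  rw [abs_le] at h1 h2
  rw [Finset.mem_Icc]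
  constructor
  · have : (-((n * Q + 1 : ℕ) : ℤ) : ℝ) ≤ (round ((Q : ℝ) * x) : ℝ) := by
      push_cast; linarith
    exact_mod_cast this
  · have : (round ((Q : ℝ) * x) : ℝ) ≤ (((n * Q + 1 : ℕ) : ℤ) : ℝ) := by
      push_cast; linarith
    exact_mod_cast this

theorem card_aux (n Q : ℕ) (hQ : 1 ≤ Q) :
    ((Finset.Icc (-((n * Q + 1 : ℕ) : ℤ)) ((n * Q + 1 : ℕ) : ℤ)).card : ℝ) ≤ (2 * n + 3) * Q := by
  have : (Finset.Icc (-((n * Q + 1 : ℕ) : ℤ)) ((n * Q + 1 : ℕ) : ℤ)).card = 2 * (n * Q) + 3 := by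
    rw [Int.card_Icc]; omega
  rw [this]
  have hQ' : (1 : ℝ) ≤ Q := by exact_mod_cast hQ
  push_cast
  nlinarith

theorem Lset_approx (x : ℝ) (hx : x ∈ Lset) (k : ℕ) (hk : 2 ≤ k) :
    ∃ᶠ q : ℕ in atTop, 1 ≤ q ∧ |x - round ((q : ℝ) * x) / (q : ℝ)| ≤ 1 / (q : ℝ) ^ k := by
  have h := hx k (by exact_mod_cast hk)
  refine (h.and_eventually (eventually_ge_atTop 1)).mono ?_
  rintro q ⟨h1, hq⟩
  refine ⟨hq, ?_⟩
  have hq1 : (1 : ℝ) ≤ q := by exact_mod_cast hq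
  have hq0 : (0 : ℝ) < q := by linarith
  rw [Real.rpow_neg hq0.le, Real.rpow_natCast, ← one_div] at h1
  have e : x - round ((q : ℝ) * x) / (q : ℝ) = ((q : ℝ) * x - round ((q : ℝ) * x)) / q := by
    field_simp
  rw [e, abs_div, Nat.abs_cast]
  exact (div_le_self (abs_nonneg _) hq1).trans h1.le

theorem dimH_Lset : dimH Lset = 0 := by
  have hU : Lset ⊆ ⋃ n : ℕ, {x | x ∈ Lset ∧ |x| ≤ n} := fun x hx => by
    obtain ⟨n, hn⟩ := exists_nat_ge |x|
    exact mem_iUnion.2 ⟨n, hx, hn⟩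
  refine le_antisymm ((dimH_mono hU).trans ?_) bot_le
  rw [dimH_iUnion]
  refine iSup_le fun n => ?_
  refine ENNReal.le_of_forall_pos_le_add fun ε hε _ => ?_
  rw [zero_add]
  refine dimH_le_of_hausdorffMeasure_ne_top ?_
  have hε' : (0 : ℝ) < ε := by exact_mod_cast hε
  obtain ⟨k, hk⟩ := exists_nat_gt (2 / (ε : ℝ))
  have hk2 : (2 : ℝ) < k * ε := by rwa [div_lt_iff₀ hε'] at hk
  rw [hausdorff_cantelli {x | x ∈ Lset ∧ |x| ≤ n}
    (fun q => Finset.Icc (-((n * q + 1 : ℕ) : ℤ)) ((n * q + 1 : ℕ) : ℤ))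
    (fun q p => (p : ℝ) / q) (2 * n + 3) ε 1 (k + 2) hε' (by positivity) (by omega)
    (fun q hq => by simpa using card_aux n q hq) (by push_cast; nlinarith)]
  · simp
  · rintro x ⟨hx, hxn⟩
    refine (Lset_approx x hx (k + 2) (by omega)).mono ?_
    rintro q ⟨hq, h⟩
    exact ⟨_, abs_round_le_aux n q x hxn, by rwa [Real.dist_eq]⟩

theorem dimH_prod_le : dimH (Lset ×ˢ Lset) ≤ 1 := by
  have hU : Lset ×ˢ Lset ⊆ ⋃ n : ℕ, {z : ℝ × ℝ | z.1 ∈ Lset ∧ |z.1| ≤ n ∧ |z.2| ≤ n} := by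
    rintro ⟨x, y⟩ ⟨hx, -⟩
    obtain ⟨n, hn⟩ := exists_nat_ge (max |x| |y|)
    exact mem_iUnion.2 ⟨n, hx, (le_max_left _ _).trans hn, (le_max_right _ _).trans hn⟩
  refine (dimH_mono hU).trans ?_
  rw [dimH_iUnion]
  refine iSup_le fun n => ?_
  refine ENNReal.le_of_forall_pos_le_add fun ε hε _ => ?_
  have e1 : (1 : ENNReal) + ε = ((1 + ε : NNReal) : ENNReal) := by simp
  rw [e1]
  refine dimH_le_of_hausdorffMeasure_ne_top ?_
  have hε' : (0 : ℝ) < ε := by exact_mod_cast hε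
  obtain ⟨k, hk⟩ := exists_nat_gt (2 / (ε : ℝ))
  have hk2 : (2 : ℝ) < k * ε := by rwa [div_lt_iff₀ hε'] at hk
  rw [hausdorff_cantelli {z : ℝ × ℝ | z.1 ∈ Lset ∧ |z.1| ≤ n ∧ |z.2| ≤ n}
    (fun q => Finset.Icc (-((n * q + 1 : ℕ) : ℤ)) ((n * q + 1 : ℕ) : ℤ) ×ˢ
      Finset.Icc (-((n * q ^ (k + 2) + 1 : ℕ) : ℤ)) ((n * q ^ (k + 2) + 1 : ℕ) : ℤ))
    (fun q p => ((p.1 : ℝ) / q, (p.2 : ℝ) / (q : ℝ) ^ (k + 2)))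
    ((2 * n + 3) * (2 * n + 3)) ((1 + ε : NNReal) : ℝ) (1 + (k + 2)) (k + 2)
    (by push_cast; positivity) (by positivity) (by omega)
    (fun q hq => ?_) (by push_cast; nlinarith)]
  · simp
  · rintro ⟨x, y⟩ ⟨hx, hxn, hyn⟩
    simp only at hx hxn hyn
    refine (Lset_approx x hx (k + 2) (by omega)).mono ?_
    rintro q ⟨hq, h⟩
    refine ⟨(_, _), Finset.mk_mem_product (abs_round_le_aux n q x hxn)
      (abs_round_le_aux n (q ^ (k + 2)) y hyn), ?_⟩
    rw [Prod.dist_eq]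
    refine max_le (by rwa [Real.dist_eq]) ?_
    have hq0 : (0 : ℝ) < q := by exact_mod_cast hq
    have hQ : (0 : ℝ) < (q : ℝ) ^ (k + 2) := by positivity
    simp only [Real.dist_eq, Nat.cast_pow]
    have h5 := abs_sub_round ((q : ℝ) ^ (k + 2) * y)
    have e : y - round ((q : ℝ) ^ (k + 2) * y) / (q : ℝ) ^ (k + 2)
        = ((q : ℝ) ^ (k + 2) * y - round ((q : ℝ) ^ (k + 2) * y)) / (q : ℝ) ^ (k + 2) := by
      field_simp
    rw [e, abs_div, abs_of_pos hQ]
    gcongr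
    linarith
  · rw [Finset.card_product]
    have h1 := card_aux n q hq
    have h2 := card_aux n (q ^ (k + 2)) (Nat.one_le_pow _ _ hq)
    rw [Nat.cast_mul]
    calc _ ≤ ((2 * (n : ℝ) + 3) * q) * ((2 * n + 3) * ((q ^ (k + 2) : ℕ) : ℝ)) := by gcongr
      _ = _ := by push_cast; ring

theorem liouville_mem_Lset {x : ℝ} (hx : Liouville x) : x ∈ Lset := by
  intro v hv
  obtain ⟨n, hn⟩ := exists_nat_ge v
  refine ((hx.frequently_exists_num (n + 1)).and_eventually (eventually_ge_atTop 1)).mono ?_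
  rintro q ⟨⟨a, -, h⟩, hq⟩
  have hq1 : (1 : ℝ) ≤ q := by exact_mod_cast hq
  have hq0 : (0 : ℝ) < q := by linarith
  refine (round_le _ a).trans_lt ?_
  have e : (q : ℝ) * x - a = q * (x - a / q) := by field_simp
  rw [e, abs_mul, abs_of_pos hq0]
  calc (q : ℝ) * |x - a / q| < q * (1 / (q : ℝ) ^ (n + 1)) := by gcongr
    _ = (q : ℝ) ^ (-(n : ℝ)) := by
      rw [Real.rpow_neg hq0.le, Real.rpow_natCast]; field_simp; ring
    _ ≤ (q : ℝ) ^ (-v) := Real.rpow_le_rpow_of_exponent_le hq1 (by linarith)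

theorem one_le_dimH_prod : 1 ≤ dimH (Lset ×ˢ Lset) := by
  have himg : (fun z : ℝ × ℝ => z.1 + z.2) '' (Lset ×ˢ Lset) = univ := by
    refine eq_univ_of_forall fun x => ?_
    have h1 := eventually_residual_liouville
    have h2 : ∀ᶠ y in residual ℝ, Liouville (x - y) :=
      (tendsto_residual_of_isOpenMap (Homeomorph.subLeft x).continuous
        (Homeomorph.subLeft x).isOpenMap).eventually h1
    obtain ⟨y, hy1, hy2⟩ := (dense_of_mem_residual (h1.and h2)).nonempty
    exact ⟨(y, x - y), ⟨liouville_mem_Lset hy1, liouville_mem_Lset hy2⟩, by simp⟩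
  have hL : LipschitzWith (1 + 1) (fun z : ℝ × ℝ => z.1 + z.2) :=
    LipschitzWith.prod_fst.add LipschitzWith.prod_snd
  have := hL.dimH_image_le (Lset ×ˢ Lset)
  rwa [himg, Real.dimH_univ] at this

/-- dim_H (L × L) = 1 although dim_H L = 0. -/
theorem stmt11 : dimH (Lset ×ˢ Lset) = 1 ∧ dimH Lset = 0 := by
  exact ⟨le_antisymm dimH_prod_le one_le_dimH_prod, dimH_Lset⟩
end

section
/- For 1 ≤ i ≤ d, let ψ_i : ℕ → ℝ^+ and b_i ∈ ℕ_{≥2}, and set S(ψ_i) = { x ∈ [0,1] : ‖b_i^n x‖ < ψ_i(n) for infinitely many n }. Then dim_H (S(ψ_1) × ⋯ × S(ψ_d)) ≥ min_{1 ≤ i ≤ d} { d − 1 + dim_H S(ψ_i) }. -/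
open Filter MeasureTheory Set
open scoped ENNReal

/-- The shrinking target set `S(ψ)` for the map x ↦ bⁿx, via the distance to the nearest integer. -/
def Sset (b : ℕ) (ψ : ℕ → ℝ) : Set ℝ :=
  {x ∈ Set.Icc (0:ℝ) 1 |
    ∃ᶠ n : ℕ in Filter.atTop, |(b : ℝ) ^ n * x - round ((b : ℝ) ^ n * x)| < ψ n}

/-- The integer formed by the first `m` digits. -/
def digN {b : ℕ} (ω : ℕ → Fin b) : ℕ → ℕ
  | 0 => 0
  | m + 1 => b * digN ω m + (ω m : ℕ)

lemma digN_inj {b : ℕ} (ω ω' : ℕ → Fin b) (m : ℕ) (h : digN ω m = digN ω' m) :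
    ∀ p < m, ω p = ω' p := by
  induction m with
  | zero => intro p hp; omega
  | succ m ih =>
    simp only [digN] at h
    have h1 : (ω m : ℕ) = ω' m := by
      have := congrArg (· % b) h
      simpa [Nat.mul_add_mod, Nat.mod_eq_of_lt (ω m).2, Nat.mod_eq_of_lt (ω' m).2] using this
    have hb : 0 < b := lt_of_le_of_lt (Nat.zero_le _) (ω m).2
    have h2 : digN ω m = digN ω' m := by
      rw [h1] at h
      exact Nat.eq_of_mul_eq_mul_left hb (by omega)
    intro p hp
    rcases Nat.lt_succ_iff_lt_or_eq.mp hp with h3 | h3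
    · exact ih h2 p h3
    · subst h3; exact Fin.ext h1

lemma digN_eq {b : ℕ} (hb : 2 ≤ b) (ω : ℕ → Fin b) (m : ℕ) :
    (digN ω m : ℝ) = (b : ℝ) ^ m * ∑ i ∈ Finset.range m, Real.ofDigitsTerm ω i := by
  have hb0 : (b : ℝ) ≠ 0 := by positivity
  induction m with
  | zero => simp [digN]
  | succ m ih =>
    rw [Finset.sum_range_succ, digN]
    push_cast
    rw [ih, mul_add, Real.ofDigitsTerm]
    field_simp
    ring

lemma mul_ofDigits {b : ℕ} (hb : 2 ≤ b) (ω : ℕ → Fin b) (m : ℕ) :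
    (b : ℝ) ^ m * Real.ofDigits ω = digN ω m + Real.ofDigits (fun i => ω (i + m)) := by
  have hb0 : (b : ℝ) ≠ 0 := by positivity
  rw [Real.ofDigits_eq_sum_add_ofDigits ω m, digN_eq hb, mul_add]
  field_simp

lemma measurable_ofDigits' {b : ℕ} : Measurable (Real.ofDigits : (ℕ → Fin b) → ℝ) := by
  unfold Real.ofDigits
  have : ∀ n, Measurable (fun ω : ℕ → Fin b => Real.ofDigitsTerm ω n) := by
    intro n
    unfold Real.ofDigitsTerm
    have h : Measurable (fun k : Fin b => ((k : ℕ) : ℝ) * ((b : ℝ) ^ (n + 1))⁻¹) :=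
      measurable_of_countable _
    exact h.comp (measurable_pi_apply n)
  refine measurable_of_tendsto_metrizable
    (f := fun N (ω : ℕ → Fin b) => ∑ n ∈ Finset.range N, Real.ofDigitsTerm ω n)
    (fun N => by
      exact Finset.measurable_fun_sum _ (fun n _ => this n)) ?_
  rw [tendsto_pi_nhds]
  intro ω
  exact (Real.summable_ofDigitsTerm (digits := ω)).hasSum.tendsto_sum_nat

open Classical in
lemma exists_coord_measure {b : ℕ} (hb : 2 ≤ b) (B : Set ℕ) :
    ∃ μ : Measure ℝ, IsProbabilityMeasure μ ∧
      1 ≤ μ {x ∈ Set.Icc (0 : ℝ) 1 | ∀ n L : ℕ, n ≤ L → (∀ p, n ≤ p → p < L → p ∈ B) →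
        |(b : ℝ) ^ n * x - round ((b : ℝ) ^ n * x)| ≤ (b : ℝ) ^ n / (b : ℝ) ^ L} ∧
      ∀ (m : ℕ) (a r : ℝ), r * (b : ℝ) ^ m ≤ 1 →
        μ (Metric.closedBall a r) ≤ ENNReal.ofReal
          (4 * ((b : ℝ) ^ ((Finset.range m).filter (· ∈ B)).card / (b : ℝ) ^ m)) := by
  have hb1 : 0 < b := by omega
  have hbr : (0 : ℝ) < b := by exact_mod_cast hb1
  have : NeZero b := ⟨by omega⟩
  let ν : Measure (Fin b) := (PMF.uniformOfFintype (Fin b)).toMeasure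
  let P : Measure (ℕ → Fin b) := Measure.infinitePi (fun _ : ℕ => ν)
  let kill : (ℕ → Fin b) → (ℕ → Fin b) := fun ω p => if p ∈ B then 0 else ω p
  have hkill : Measurable kill := by
    refine measurable_pi_lambda _ (fun p => ?_)
    by_cases hp : p ∈ B
    · simp [kill, hp]
    · simpa [kill, hp] using measurable_pi_apply p
  let f : (ℕ → Fin b) → ℝ := fun ω => Real.ofDigits (kill ω)
  have hf : Measurable f := measurable_ofDigits'.comp hkill
  have hP : IsProbabilityMeasure (P.map f) := Measure.isProbabilityMeasure_map hf.aemeasurable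
  refine ⟨P.map f, hP, ?_, ?_⟩
  · refine le_trans ?_ (Measure.le_map_apply hf.aemeasurable _)
    have : ∀ ω, f ω ∈ {x ∈ Set.Icc (0 : ℝ) 1 | ∀ n L : ℕ, n ≤ L →
        (∀ p, n ≤ p → p < L → p ∈ B) →
        |(b : ℝ) ^ n * x - round ((b : ℝ) ^ n * x)| ≤ (b : ℝ) ^ n / (b : ℝ) ^ L} := by
      intro ω
      refine ⟨⟨Real.ofDigits_nonneg _, Real.ofDigits_le_one _⟩, ?_⟩
      intro n L hnL hB
      refine (round_le _ (digN (kill ω) n : ℤ)).trans ?_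
      simp only [f, mul_ofDigits hb]
      have h0 := Real.ofDigits_nonneg (fun i => kill ω (i + n))
      have h1 := Real.ofDigits_eq_sum_add_ofDigits (fun i => kill ω (i + n)) (L - n)
      rw [Finset.sum_eq_zero] at h1
      · have h2 := Real.ofDigits_le_one (fun i => kill ω (i + (L - n) + n))
        push_cast
        rw [add_sub_cancel_left, abs_of_nonneg h0, h1, zero_add]
        have h3 : (b : ℝ) ^ n / (b : ℝ) ^ L = ((b : ℝ) ^ (L - n))⁻¹ := by
          rw [pow_sub₀ _ hbr.ne' hnL]; field_simp
        rw [h3]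
        exact mul_le_of_le_one_right (by positivity) h2
      · intro i hi
        have : i + n ∈ B := hB _ (by omega) (by have := Finset.mem_range.mp hi; omega)
        simp [Real.ofDigitsTerm, kill, this]
    have h2 : f ⁻¹' {x ∈ Set.Icc (0 : ℝ) 1 | ∀ n L : ℕ, n ≤ L →
        (∀ p, n ≤ p → p < L → p ∈ B) →
        |(b : ℝ) ^ n * x - round ((b : ℝ) ^ n * x)| ≤ (b : ℝ) ^ n / (b : ℝ) ^ L} = univ :=
      Set.eq_univ_of_forall this
    rw [h2, measure_univ]
  · intro m a r hr
    rw [Measure.map_apply hf Metric.isClosed_closedBall.measurableSet]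
    set z : ℤ := ⌈a * (b : ℝ) ^ m - 2⌉ with hz
    have hsub : f ⁻¹' (Metric.closedBall a r) ⊆
        ⋃ j ∈ Finset.range 4, {ω | (digN (kill ω) m : ℤ) = z + j} := by
      intro ω hω
      have h0 := Real.ofDigits_nonneg (fun i => kill ω (i + m))
      have h1 := Real.ofDigits_le_one (fun i => kill ω (i + m))
      have h2 := mul_ofDigits hb (kill ω) m
      have h3 : |f ω - a| ≤ r := by simpa [Real.dist_eq] using hω
      have hpow : (0 : ℝ) < (b : ℝ) ^ m := by positivity
      have h4 : |f ω * (b : ℝ) ^ m - a * (b : ℝ) ^ m| ≤ 1 := by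
        rw [← sub_mul, abs_mul, abs_of_pos hpow]
        exact (mul_le_mul_of_nonneg_right h3 hpow.le).trans hr
      have h5 : f ω * (b : ℝ) ^ m = digN (kill ω) m + Real.ofDigits (fun i => kill ω (i + m)) := by
        rw [← h2, mul_comm]
      rw [h5, abs_le] at h4
      have h6 : z ≤ (digN (kill ω) m : ℤ) := by
        rw [hz, Int.ceil_le]; push_cast; linarith
      have h7 : (digN (kill ω) m : ℤ) < z + 4 := by
        have : ((digN (kill ω) m : ℤ) : ℝ) < ((z + 4 : ℤ) : ℝ) := by
          have := Int.le_ceil (a * (b : ℝ) ^ m - 2)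
          rw [← hz] at this
          push_cast; linarith
        exact_mod_cast this
      simp only [Set.mem_iUnion]
      refine ⟨((digN (kill ω) m : ℤ) - z).toNat, ?_, ?_⟩
      · rw [Finset.mem_range]; omega
      · simp only [Set.mem_ofPred_eq]; omega
    have hone : ∀ j : ℕ, P {ω | (digN (kill ω) m : ℤ) = z + j} ≤ ENNReal.ofReal
          ((b : ℝ) ^ ((Finset.range m).filter (· ∈ B)).card / (b : ℝ) ^ m) := by
      intro j
      rcases Set.eq_empty_or_nonempty {ω | (digN (kill ω) m : ℤ) = z + j} with he | ⟨c, hc⟩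
      · rw [he]; simp
      · have hs : {ω | (digN (kill ω) m : ℤ) = z + j} ⊆
            Set.pi ((Finset.range m).filter (¬ · ∈ B) : Finset ℕ) (fun p => {c p}) := by
          intro ω hω p hp
          simp only [Set.mem_ofPred_eq] at hω hc
          have h1 : digN (kill ω) m = digN (kill c) m := by
            have := hω.trans hc.symm; exact_mod_cast this
          have hp' := Finset.mem_filter.mp (Finset.mem_coe.mp hp)
          have h2 := digN_inj _ _ m h1 p (Finset.mem_range.mp hp'.1)
          simpa [kill, hp'.2] using h2
        refine (measure_mono hs).trans ?_
        have hinf := Measure.infinitePi_pi (fun _ : ℕ => ν)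
          (s := (Finset.range m).filter (¬ · ∈ B)) (t := fun p => {c p})
          (fun i _ => MeasurableSet.singleton _)
        refine hinf.le.trans ?_
        have hν : ∀ x : Fin b, ν {x} = ENNReal.ofReal ((b : ℝ)⁻¹) := by
          intro x
          simp only [ν]
          rw [PMF.toMeasure_apply_singleton _ _ (MeasurableSet.singleton _),
            PMF.uniformOfFintype_apply, Fintype.card_fin, ENNReal.ofReal_inv_of_pos hbr]
          simp
        simp only [hν, Finset.prod_const]
        rw [← ENNReal.ofReal_pow (by positivity)]
        apply ENNReal.ofReal_le_ofReal
        have hcard := Finset.card_filter_add_card_filter_not (s := Finset.range m) (· ∈ B)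
        rw [Finset.card_range] at hcard
        have hpw : (b : ℝ) ^ m = (b : ℝ) ^ ((Finset.range m).filter (· ∈ B)).card *
            (b : ℝ) ^ ((Finset.range m).filter (¬ · ∈ B)).card := by
          rw [← pow_add, hcard]
        rw [hpw, inv_pow]
        apply le_of_eq
        field_simp
    refine (measure_mono hsub).trans ((measure_biUnion_finset_le _ _).trans ?_)
    refine (Finset.sum_le_sum (fun j _ => hone j)).trans ?_
    rw [Finset.sum_const, Finset.card_range, ENNReal.ofReal_mul (by norm_num)]
    simp


lemma exists_stages {d : ℕ} (b : Fin d → ℕ) (hb : ∀ i, 2 ≤ b i) (ψ : Fin d → ℕ → ℝ)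
    (t ε : ℝ) (hε : 0 < ε) (I : ℕ → Fin d)
    (H : ∀ i, ∃ᶠ n : ℕ in atTop, ∃ L : ℕ, n ≤ L ∧ (b i : ℝ) ^ n / (b i : ℝ) ^ L < ψ i n ∧
      t * L ≤ n + 1) :
    ∃ n L : ℕ → ℕ, ∀ k, n k ≤ L k ∧
      (b (I k) : ℝ) ^ n k / (b (I k) : ℝ) ^ L k < ψ (I k) (n k) ∧
      t * L k ≤ n k + 1 ∧ k ≤ n k ∧
      ∑ j ∈ Finset.range k, (L j : ℝ) * Real.log (b (I j)) ≤ ε * (n k * Real.log (b (I k))) := by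
  have F : ∀ (k : ℕ) (E : ℝ), ∃ n L : ℕ, n ≤ L ∧
      (b (I k) : ℝ) ^ n / (b (I k) : ℝ) ^ L < ψ (I k) n ∧
      t * L ≤ n + 1 ∧ k ≤ n ∧ E ≤ ε * (n * Real.log (b (I k))) := by
    intro k E
    have hl : 0 < Real.log (b (I k)) := Real.log_pos (by exact_mod_cast hb (I k))
    obtain ⟨n, hn, L, h1, h2, h3⟩ := (frequently_atTop.mp (H (I k)))
      (max k ⌈E / (ε * Real.log (b (I k)))⌉₊)
    refine ⟨n, L, h1, h2, h3, le_trans (le_max_left _ _) hn, ?_⟩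
    have h4 : E / (ε * Real.log (b (I k))) ≤ n :=
      (Nat.le_ceil _).trans (by exact_mod_cast le_trans (le_max_right _ _) hn)
    rw [div_le_iff₀ (by positivity)] at h4
    linarith
  choose nn LL h1 h2 h3 h4 h5 using F
  let E : ℕ → ℝ := fun k => Nat.rec (0 : ℝ) (fun k e => e + (LL k e : ℝ) * Real.log (b (I k))) k
  refine ⟨fun k => nn k (E k), fun k => LL k (E k), fun k =>
    ⟨h1 _ _, h2 _ _, h3 _ _, h4 _ _, ?_⟩⟩
  have hE : ∀ k, ∑ j ∈ Finset.range k, (LL j (E j) : ℝ) * Real.log (b (I j)) = E k := by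
    intro k
    induction k with
    | zero => simp [E]
    | succ k ih => rw [Finset.sum_range_succ, ih]
  rw [hE]
  exact h5 _ _

lemma deficit_bound {d : ℕ} (b : Fin d → ℕ) (hb : ∀ i, 2 ≤ b i)
    (t ε : ℝ) (ht0 : 0 ≤ t) (ht1 : t ≤ 1) (hε : 0 < ε) (I : ℕ → Fin d) (n L : ℕ → ℕ)
    (hL : ∀ k, t * L k ≤ n k + 1)
    (hE : ∀ k, ∑ j ∈ Finset.range k, (L j : ℝ) * Real.log (b (I j)) ≤
      ε * (n k * Real.log (b (I k))))
    (T : ℝ) (hT : 0 ≤ T) (m : Fin d → ℕ) (hm : ∀ i, m i * Real.log (b i) ≤ T) (K : ℕ) :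
    ∑ j ∈ Finset.range K, Real.log (b (I j)) * ((min (m (I j)) (L j) - n j : ℕ) : ℝ) ≤
      (1 - t + ε) * T + ∑ i, Real.log (b i) := by
  have hl : ∀ i, 0 < Real.log (b i) := fun i => Real.log_pos (by exact_mod_cast hb i)
  induction K with
  | zero =>
    simp only [Finset.range_zero, Finset.sum_empty]
    have : 0 ≤ ∑ i, Real.log (b i) := Finset.sum_nonneg (fun i _ => (hl i).le)
    have : 0 ≤ (1 - t + ε) * T := mul_nonneg (by linarith) hT
    linarith
  | succ K ih =>
    rw [Finset.sum_range_succ]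
    by_cases hc : n K < min (m (I K)) (L K)
    · have h1 : ∑ j ∈ Finset.range K, Real.log (b (I j)) * ((min (m (I j)) (L j) - n j : ℕ) : ℝ) ≤
          ε * T := by
        calc _ ≤ ∑ j ∈ Finset.range K, (L j : ℝ) * Real.log (b (I j)) := by
              refine Finset.sum_le_sum (fun j _ => ?_)
              rw [mul_comm]
              refine mul_le_mul_of_nonneg_right ?_ (hl _).le
              exact_mod_cast (by omega)
          _ ≤ _ := hE K
          _ ≤ ε * T := by
              refine mul_le_mul_of_nonneg_left (le_trans ?_ (hm (I K))) hε.le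
              refine mul_le_mul_of_nonneg_right ?_ (hl _).le
              exact_mod_cast (by omega)
      have h2 : Real.log (b (I K)) * ((min (m (I K)) (L K) - n K : ℕ) : ℝ) ≤
          (1 - t) * T + Real.log (b (I K)) := by
        rw [Nat.cast_sub hc.le]
        set m' := min (m (I K)) (L K) with hm'
        have e1 : (m' : ℝ) ≤ m (I K) := by exact_mod_cast min_le_left _ _
        have e2 : (m' : ℝ) ≤ L K := by exact_mod_cast min_le_right _ _
        have e3 : t * m' ≤ n K + 1 := (mul_le_mul_of_nonneg_left e2 ht0).trans (hL K)
        have e4 : (m' : ℝ) - n K ≤ (1 - t) * m (I K) + 1 := by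
          have := mul_le_mul_of_nonneg_left e1 (sub_nonneg.mpr ht1)
          linarith
        have e5 := mul_le_mul_of_nonneg_left e4 (hl (I K)).le
        have e6 := mul_le_mul_of_nonneg_left (hm (I K)) (sub_nonneg.mpr ht1)
        linarith
      have h3 : Real.log (b (I K)) ≤ ∑ i, Real.log (b i) :=
        Finset.single_le_sum (f := fun i => Real.log (b i)) (fun i _ => (hl i).le)
          (Finset.mem_univ _)
      linarith
    · have : min (m (I K)) (L K) - n K = 0 := by omega
      rw [this]
      simpa using ih

open Classical in
lemma deficit_total {d : ℕ} (b : Fin d → ℕ) (hb : ∀ i, 2 ≤ b i)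
    (t ε : ℝ) (ht0 : 0 ≤ t) (ht1 : t ≤ 1) (hε : 0 < ε) (I : ℕ → Fin d) (n L : ℕ → ℕ)
    (hn : ∀ k, k ≤ n k)
    (hL : ∀ k, t * L k ≤ n k + 1)
    (hE : ∀ k, ∑ j ∈ Finset.range k, (L j : ℝ) * Real.log (b (I j)) ≤
      ε * (n k * Real.log (b (I k))))
    (T : ℝ) (hT : 0 ≤ T) (m : Fin d → ℕ) (hm : ∀ i, m i * Real.log (b i) ≤ T) :
    ∑ i, Real.log (b i) * (((Finset.range (m i)).filter
      (· ∈ {p | ∃ j, I j = i ∧ n j ≤ p ∧ p < L j})).card : ℝ) ≤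
      (1 - t + ε) * T + ∑ i, Real.log (b i) := by
  have hl : ∀ i, 0 < Real.log (b i) := fun i => Real.log_pos (by exact_mod_cast hb i)
  set K := ∑ i, m i with hK
  refine le_trans ?_ (deficit_bound b hb t ε ht0 ht1 hε I n L hL hE T hT m hm K)
  rw [← Finset.sum_fiberwise (Finset.range K) I]
  refine Finset.sum_le_sum (fun i _ => ?_)
  have h1 : ((Finset.range (m i)).filter
      (· ∈ {p | ∃ j, I j = i ∧ n j ≤ p ∧ p < L j})) ⊆
      ((Finset.range K).filter (fun j => I j = i)).biUnion
        (fun j => Finset.Ico (n j) (min (m (I j)) (L j))) := by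
    intro p hp
    simp only [Finset.mem_filter, Finset.mem_range, Set.mem_ofPred_eq] at hp
    obtain ⟨hpm, j, hj, h2, h3⟩ := hp
    have hmK : m i ≤ K := Finset.single_le_sum (f := m) (fun _ _ => Nat.zero_le _)
      (Finset.mem_univ i)
    have := hn j
    simp only [Finset.mem_biUnion, Finset.mem_filter, Finset.mem_range, Finset.mem_Ico]
    refine ⟨j, ⟨by omega, hj⟩, h2, ?_⟩
    rw [hj]; omega
  have h2 := (Finset.card_le_card h1).trans Finset.card_biUnion_le
  simp only [Nat.card_Ico] at h2
  have h3 : ((((Finset.range (m i)).filter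
      (· ∈ {p | ∃ j, I j = i ∧ n j ≤ p ∧ p < L j})).card : ℕ) : ℝ) ≤
      ∑ j ∈ (Finset.range K).filter (fun j => I j = i),
        ((min (m (I j)) (L j) - n j : ℕ) : ℝ) := by
    exact_mod_cast h2
  refine (mul_le_mul_of_nonneg_left h3 (hl i).le).trans (le_of_eq ?_)
  rw [Finset.mul_sum]
  refine Finset.sum_congr rfl (fun j hj => ?_)
  rw [(Finset.mem_filter.mp hj).2]


lemma dimH_upper {b : ℕ} (hb : 2 ≤ b) (ψ : ℕ → ℝ) (t : ℝ) (ht : 0 < t) (ht1 : t ≤ 1)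
    (H : ∀ᶠ n : ℕ in atTop, ∀ L : ℕ, n ≤ L → t * L ≤ n + 1 → ψ n ≤ (b : ℝ) ^ n / (b : ℝ) ^ L) :
    dimH (Sset b ψ) ≤ ENNReal.ofReal t := by
  have hb1 : (1 : ℝ) < b := by exact_mod_cast hb
  have hb0 : (0 : ℝ) < b := by linarith
  let ρ : ℕ → ℝ := fun n => (b : ℝ) ^ (1 - n / t : ℝ)
  have hρ0 : ∀ n, 0 < ρ n := fun n => Real.rpow_pos_of_pos hb0 _
  have hψ : ∀ᶠ n : ℕ in atTop, ψ n ≤ (b : ℝ) ^ n * ρ n := by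
    filter_upwards [H] with n hn
    have h1 : (n : ℝ) / t ≤ (n + 1) / t := by gcongr; linarith
    have h0 : (n : ℝ) ≤ n / t := by
      rw [le_div_iff₀ ht]; exact mul_le_of_le_one_right (by positivity) ht1
    have h2 := hn ⌊((n : ℝ) + 1) / t⌋₊ (Nat.le_floor (h0.trans h1)) (by
      have := Nat.floor_le (a := ((n : ℝ) + 1) / t) (by positivity)
      rw [le_div_iff₀ ht] at this
      linarith)
    refine h2.trans ?_
    rw [div_eq_mul_inv]
    refine mul_le_mul_of_nonneg_left ?_ (by positivity)
    rw [← Real.rpow_natCast, ← Real.rpow_neg hb0.le]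
    refine Real.rpow_le_rpow_of_exponent_le hb1.le ?_
    have := Nat.lt_floor_add_one (((n : ℝ) + 1) / t)
    linarith
  refine le_of_forall_gt_imp_ge_of_dense fun s' hs' => ?_
  obtain ⟨s, hs1, hs2⟩ := ENNReal.lt_iff_exists_nnreal_btwn.mp hs'
  refine le_trans ?_ hs2.le
  have hts : t < s := by
    rw [ENNReal.ofReal_lt_coe_iff ht.le] at hs1
    exact hs1
  refine dimH_le_of_hausdorffMeasure_ne_top ?_
  -- the covers
  let g : ℕ → ℝ := fun n => ((b : ℝ) ^ n + 1) * (2 * ρ n) ^ (s : ℝ)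
  have hg0 : ∀ n, 0 ≤ g n := fun n => by have := hρ0 n; positivity
  have hgs : Summable g := by
    have hq : (b : ℝ) ^ (1 - s / t : ℝ) < 1 :=
      Real.rpow_lt_one_of_one_lt_of_neg hb1 (by
        have : 1 < (s : ℝ) / t := by rw [lt_div_iff₀ ht]; linarith
        linarith)
    refine Summable.of_nonneg_of_le hg0 (fun n => ?_)
      ((summable_geometric_of_lt_one (by positivity) hq).mul_left (2 * (2 * b : ℝ) ^ (s : ℝ)))
    have e1 : (b : ℝ) ^ n + 1 ≤ 2 * (b : ℝ) ^ n := by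
      have := one_le_pow₀ (n := n) hb1.le
      linarith
    have e2 : (2 * ρ n) ^ (s : ℝ) = (2 * b : ℝ) ^ (s : ℝ) * (b : ℝ) ^ (-(n * (s / t)) : ℝ) := by
      have : 2 * ρ n = (2 * b) * (b : ℝ) ^ (-(n / t) : ℝ) := by
        simp only [ρ]
        rw [sub_eq_add_neg, Real.rpow_add hb0, Real.rpow_one]; ring
      rw [this, Real.mul_rpow (by positivity) (by positivity), ← Real.rpow_mul hb0.le]
      congr 2
      ring
    have e3 : ((b : ℝ) ^ (1 - s / t : ℝ)) ^ n = (b : ℝ) ^ n * (b : ℝ) ^ (-(n * (s / t)) : ℝ) := by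
      rw [← Real.rpow_natCast, ← Real.rpow_natCast, ← Real.rpow_mul hb0.le, ← Real.rpow_add hb0]
      congr 1
      ring
    simp only [g]
    rw [e2, e3]
    calc _ ≤ (2 * (b : ℝ) ^ n) * ((2 * b : ℝ) ^ (s : ℝ) * (b : ℝ) ^ (-(n * (s / t)) : ℝ)) := by
          gcongr
      _ = _ := by ring
  have hρanti : ∀ n N, ρ (n + N) ≤ ρ N := by
    intro n N
    refine Real.rpow_le_rpow_of_exponent_le hb1.le ?_
    have : (N : ℝ) / t ≤ ((n + N : ℕ) : ℝ) / t := by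
      gcongr; omega
    linarith
  have hρlim : Tendsto (fun N => ENNReal.ofReal (2 * ρ N)) atTop (nhds 0) := by
    have h1 : Tendsto ρ atTop (nhds 0) := by
      have hq : (b : ℝ) ^ (-(1 / t) : ℝ) < 1 :=
        Real.rpow_lt_one_of_one_lt_of_neg hb1 (by
          have : 0 < 1 / t := by positivity
          linarith)
      have := (tendsto_pow_atTop_nhds_zero_of_lt_one (by positivity) hq).const_mul (b : ℝ)
      rw [mul_zero] at this
      refine this.congr (fun n => ?_)
      simp only [ρ]
      rw [sub_eq_add_neg, Real.rpow_add hb0, Real.rpow_one, ← Real.rpow_natCast,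
        ← Real.rpow_mul hb0.le]
      congr 2
      ring
    have := ENNReal.tendsto_ofReal (h1.const_mul 2)
    simpa using this
  have hdiam : ∀ N (i : Σ n : ℕ, Fin (b ^ (n + N) + 1)),
      Metric.ediam (Metric.closedBall (((i.2 : ℕ) : ℝ) / (b : ℝ) ^ (i.1 + N)) (ρ (i.1 + N)))
        ≤ ENNReal.ofReal (2 * ρ (i.1 + N)) := by
    intro N i
    rw [← Metric.closedEBall_ofReal (hρ0 _).le, ENNReal.ofReal_mul (by norm_num)]
    refine Metric.ediam_closedEBall_le.trans ?_
    simp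
  have key := Measure.hausdorffMeasure_le_liminf_tsum (X := ℝ) (s : ℝ) (Sset b ψ) (l := atTop)
    (ι := fun N : ℕ => Σ n : ℕ, Fin (b ^ (n + N) + 1))
    (fun N => ENNReal.ofReal (2 * ρ N)) hρlim
    (fun N i => Metric.closedBall (((i.2 : ℕ) : ℝ) / (b : ℝ) ^ (i.1 + N)) (ρ (i.1 + N)))
    (Eventually.of_forall fun N i => (hdiam N i).trans (ENNReal.ofReal_le_ofReal (by
      have := hρanti i.1 N; linarith)))
    (by
      obtain ⟨N0, hN0⟩ := eventually_atTop.mp hψ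
      filter_upwards [eventually_ge_atTop N0] with N hN x hx
      obtain ⟨⟨hx0, hx1⟩, hx2⟩ := hx
      obtain ⟨n, hn, hxn⟩ := (frequently_atTop.mp hx2) N
      have hpow : (0 : ℝ) < (b : ℝ) ^ n := by positivity
      have hr0 : 0 ≤ round ((b : ℝ) ^ n * x) := by
        rw [round_eq]; exact Int.floor_nonneg.mpr (by positivity)
      have hr1 : round ((b : ℝ) ^ n * x) ≤ (b : ℤ) ^ n := by
        rw [round_eq]
        refine Int.lt_add_one_iff.mp (Int.floor_lt.mpr ?_)
        push_cast
        have : (b : ℝ) ^ n * x ≤ (b : ℝ) ^ n := mul_le_of_le_one_right hpow.le hx1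
        linarith
      obtain ⟨k, hk⟩ := Nat.exists_eq_add_of_le hn
      have hk' : n = k + N := by omega
      subst hk'
      simp only [Set.mem_iUnion]
      refine ⟨⟨k, ⟨(round ((b : ℝ) ^ (k + N) * x)).toNat, ?_⟩⟩, ?_⟩
      · have : ((b ^ (k + N) : ℕ) : ℤ) = (b : ℤ) ^ (k + N) := by push_cast; rfl
        omega
      · simp only [Metric.mem_closedBall, Real.dist_eq]
        have hc : (((round ((b : ℝ) ^ (k + N) * x)).toNat : ℕ) : ℝ) =
            (round ((b : ℝ) ^ (k + N) * x) : ℝ) := by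
          exact_mod_cast Int.toNat_of_nonneg hr0
        rw [hc]
        have h1 := hxn.le.trans (hN0 (k + N) (by omega))
        have h2 : x - (round ((b : ℝ) ^ (k + N) * x) : ℝ) / (b : ℝ) ^ (k + N) =
            ((b : ℝ) ^ (k + N) * x - round ((b : ℝ) ^ (k + N) * x)) / (b : ℝ) ^ (k + N) := by
          field_simp
        rw [h2, abs_div, abs_of_pos hpow, div_le_iff₀ hpow]
        linarith)
  refine ne_top_of_le_ne_top (b := ∑' n, ENNReal.ofReal (g n)) hgs.tsum_ofReal_ne_top
    (key.trans ?_)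
  refine liminf_le_of_frequently_le' (Frequently.of_forall fun N => ?_)
  rw [ENNReal.tsum_sigma']
  calc _ ≤ ∑' n, ENNReal.ofReal (g (n + N)) := by
        refine ENNReal.tsum_le_tsum (fun n => ?_)
        rw [tsum_fintype]
        refine (Finset.sum_le_sum (fun p _ =>
          ENNReal.rpow_le_rpow (hdiam N ⟨n, p⟩) s.2)).trans ?_
        simp only [Finset.sum_const, Finset.card_univ, Fintype.card_fin, g]
        have := hρ0 (n + N)
        have h2 : (0 : ℝ) < 2 * ρ (n + N) := by linarith
        have h3 : ((b ^ (n + N) + 1 : ℕ) : ℝ≥0∞) = ENNReal.ofReal ((b : ℝ) ^ (n + N) + 1) := by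
          rw [← ENNReal.ofReal_natCast]
          push_cast
          rfl
        rw [nsmul_eq_mul, ENNReal.ofReal_rpow_of_pos h2, h3,
          ← ENNReal.ofReal_mul (by positivity)]
        exact le_rfl
    _ ≤ _ := ENNReal.tsum_comp_le_tsum_of_injective (add_left_injective N)
        (fun n => ENNReal.ofReal (g n))


lemma lower_bound {d : ℕ} (hd : 1 ≤ d) (ψ : Fin d → ℕ → ℝ)
    (b : Fin d → ℕ) (hb : ∀ i, 2 ≤ b i) (t ε : ℝ) (ht0 : 0 ≤ t) (ht1 : t ≤ 1) (hε : 0 < ε)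
    (H : ∀ i, ∃ᶠ n : ℕ in atTop, ∃ L : ℕ, n ≤ L ∧ (b i : ℝ) ^ n / (b i : ℝ) ^ L < ψ i n ∧
      t * L ≤ n + 1) :
    ENNReal.ofReal ((d : ℝ) - 1 + t - ε) ≤
      dimH {x : Fin d → ℝ | ∀ i, x i ∈ Sset (b i) (ψ i)} := by
  classical
  set s : ℝ := (d : ℝ) - 1 + t - ε with hs
  rcases le_or_gt s 0 with hs0 | hs0
  · rw [ENNReal.ofReal_of_nonpos hs0]; exact zero_le
  have hd0 : 0 < d := hd
  let I : ℕ → Fin d := fun k => ⟨k % d, Nat.mod_lt _ hd0⟩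
  obtain ⟨n, L, hnL⟩ := exists_stages b hb ψ t ε hε I H
  let B : Fin d → Set ℕ := fun i => {p | ∃ j, I j = i ∧ n j ≤ p ∧ p < L j}
  choose μ hμ1 hμ2 hμ3 using fun i => exists_coord_measure (hb i) (B i)
  have hbpos : ∀ i, (0 : ℝ) < b i := fun i => by
    have := hb i
    exact_mod_cast (by omega : 0 < b i)
  have hl : ∀ i, 0 < Real.log (b i) := fun i => Real.log_pos (by exact_mod_cast hb i)
  let ν : Measure (Fin d → ℝ) := Measure.pi μ
  let E : Set (Fin d → ℝ) := {x : Fin d → ℝ | ∀ i, x i ∈ Sset (b i) (ψ i)}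
  have hE : 1 ≤ ν E := by
    have hsub : Set.pi univ (fun i => {x ∈ Set.Icc (0 : ℝ) 1 | ∀ n L : ℕ, n ≤ L →
        (∀ p, n ≤ p → p < L → p ∈ B i) →
        |(b i : ℝ) ^ n * x - round ((b i : ℝ) ^ n * x)| ≤ (b i : ℝ) ^ n / (b i : ℝ) ^ L}) ⊆ E := by
      intro x hx i
      obtain ⟨h1, h2⟩ := hx i (Set.mem_univ i)
      refine ⟨h1, ?_⟩
      rw [frequently_atTop]
      intro N
      have hI : I (N * d + i) = i := by
        apply Fin.ext
        simp [I, Nat.mod_eq_of_lt i.2]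
      obtain ⟨e1, e2, e3, e4, e5⟩ := hnL (N * d + i)
      rw [hI] at e2
      refine ⟨n (N * d + i), ?_, ?_⟩
      · have : N ≤ N * d := Nat.le_mul_of_pos_right _ hd0
        omega
      · exact (h2 _ _ e1 (fun p hp1 hp2 => ⟨_, hI, hp1, hp2⟩)).trans_lt e2
    refine le_trans ?_ (measure_mono hsub)
    simp only [ν]
    rw [Measure.pi_pi]
    exact Finset.one_le_prod' (fun i _ => hμ2 i)
  let C : ℝ := (∏ i, (4 * (b i : ℝ))) * Real.exp (∑ i, Real.log (b i))
  have hC : 0 < C := mul_pos (Finset.prod_pos fun i _ => by have := hbpos i; positivity)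
    (Real.exp_pos _)
  have hball : ∀ (a : Fin d → ℝ) (r : ℝ), 0 < r → r ≤ 1 →
      ν (Metric.closedBall a r) ≤ ENNReal.ofReal (C * r ^ s) := by
    intro a r hr hr1
    let T : ℝ := - Real.log r
    have hT : 0 ≤ T := neg_nonneg.mpr (Real.log_nonpos hr.le hr1)
    have hrT : r = Real.exp (-T) := by simp [T, Real.exp_log hr]
    let m : Fin d → ℕ := fun i => ⌊T / Real.log (b i)⌋₊
    have hm : ∀ i, m i * Real.log (b i) ≤ T := fun i => by
      rw [← le_div_iff₀ (hl i)]
      exact Nat.floor_le (div_nonneg hT (hl i).le)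
    have hm2 : ∀ i, T ≤ (m i + 1) * Real.log (b i) := fun i => by
      rw [← div_le_iff₀ (hl i)]
      exact (Nat.lt_floor_add_one _).le
    have hpow : ∀ i (k : ℕ), (b i : ℝ) ^ k = Real.exp (k * Real.log (b i)) := fun i k => by
      rw [Real.exp_nat_mul, Real.exp_log (hbpos i)]
    have hdef := deficit_total b hb t ε ht0 ht1 hε I n L (fun k => (hnL k).2.2.2.1)
      (fun k => (hnL k).2.2.1) (fun k => (hnL k).2.2.2.2) T hT m hm
    simp only [ν]
    rw [closedBall_pi _ hr.le, Measure.pi_pi]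
    refine (Finset.prod_le_prod' (fun i _ => hμ3 i (m i) (a i) r ?_)).trans ?_
    · rw [hrT, hpow, ← Real.exp_add]
      apply Real.exp_le_one_iff.mpr
      have := hm i
      linarith
    rw [← ENNReal.ofReal_prod_of_nonneg (fun i _ => by have := hbpos i; positivity)]
    apply ENNReal.ofReal_le_ofReal
    set c : Fin d → ℕ := fun i => ((Finset.range (m i)).filter (· ∈ B i)).card with hc
    calc ∏ i, 4 * ((b i : ℝ) ^ (c i) / (b i : ℝ) ^ (m i))
        ≤ ∏ i, (4 * (b i : ℝ)) * (Real.exp (-T) * Real.exp (Real.log (b i) * c i)) := by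
          refine Finset.prod_le_prod (fun i _ => by have := hbpos i; positivity) (fun i _ => ?_)
          rw [mul_assoc]
          refine mul_le_mul_of_nonneg_left ?_ (by norm_num)
          rw [hpow, hpow, ← Real.exp_sub, ← Real.exp_add]
          nth_rewrite 3 [← Real.exp_log (hbpos i)]
          rw [← Real.exp_add]
          apply Real.exp_le_exp.mpr
          have := hm2 i
          linarith
      _ = (∏ i, (4 * (b i : ℝ))) * Real.exp (-(d * T) + ∑ i, Real.log (b i) * c i) := by
          rw [Finset.prod_mul_distrib]
          congr 1
          simp only [← Real.exp_add]
          rw [← Real.exp_sum, Finset.sum_add_distrib]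
          simp
      _ ≤ (∏ i, (4 * (b i : ℝ))) * Real.exp (∑ i, Real.log (b i) + (-T) * s) := by
          refine mul_le_mul_of_nonneg_left ?_ (Finset.prod_nonneg fun i _ => by
            have := hbpos i; positivity)
          apply Real.exp_le_exp.mpr
          rw [hs]
          have : ∑ i, Real.log (b i) * (c i : ℝ) ≤ (1 - t + ε) * T + ∑ i, Real.log (b i) := hdef
          linarith
      _ = C * r ^ s := by
          simp only [C]
          rw [Real.exp_add, Real.exp_mul, ← hrT]
          ring
  -- mass distribution principle
  have hset : ∀ U : Set (Fin d → ℝ), Metric.ediam U ≤ 1 →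
      ν U ≤ ENNReal.ofReal C * Metric.ediam U ^ s := by
    intro U hU
    rcases U.eq_empty_or_nonempty with rfl | ⟨x, hx⟩
    · simp
    have hne : Metric.ediam U ≠ ⊤ := ne_top_of_le_ne_top ENNReal.one_ne_top hU
    set δ : ℝ := (Metric.ediam U).toReal with hδ
    have hδU : ENNReal.ofReal δ = Metric.ediam U := ENNReal.ofReal_toReal hne
    have hδ0 : 0 ≤ δ := ENNReal.toReal_nonneg
    have hδ1 : δ ≤ 1 := by
      have := ENNReal.toReal_mono ENNReal.one_ne_top hU
      simpa using this
    have hr : ∀ r, 0 < r → δ ≤ r → r ≤ 1 → ν U ≤ ENNReal.ofReal (C * r ^ s) := by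
      intro r h0 h1 h2
      refine (measure_mono ?_).trans (hball x r h0 h2)
      intro y hy
      rw [Metric.mem_closedBall, dist_edist]
      refine le_trans ?_ h1
      exact ENNReal.toReal_mono hne (Metric.edist_le_ediam_of_mem hy hx)
    rw [← hδU, ENNReal.ofReal_rpow_of_nonneg hδ0 hs0.le, ← ENNReal.ofReal_mul hC.le]
    rcases hδ0.eq_or_lt with h | h
    · rw [← h, Real.zero_rpow hs0.ne', mul_zero, ENNReal.ofReal_zero]
      have hlim : Tendsto (fun r : ℝ => ENNReal.ofReal (C * r ^ s)) (nhdsWithin 0 (Set.Ioi 0))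
          (nhds (ENNReal.ofReal (C * 0 ^ s))) := by
        refine ENNReal.tendsto_ofReal (Tendsto.const_mul _ ?_)
        exact ((Real.continuousAt_rpow_const 0 s (Or.inr hs0.le)).tendsto).mono_left
          nhdsWithin_le_nhds
      rw [Real.zero_rpow hs0.ne', mul_zero, ENNReal.ofReal_zero] at hlim
      refine ge_of_tendsto hlim ?_
      filter_upwards [Ioc_mem_nhdsGT (zero_lt_one (α := ℝ))] with r hr'
      exact hr r hr'.1 (h ▸ hr'.1.le) hr'.2
    · exact hr δ h le_rfl hδ1
  have hC0 : ENNReal.ofReal C ≠ 0 := by simpa using hC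
  have hle : (ENNReal.ofReal C)⁻¹ • ν ≤ Measure.hausdorffMeasure s := by
    refine Measure.le_hausdorffMeasure s _ 1 zero_lt_one (fun U hU => ?_)
    rw [Measure.smul_apply, smul_eq_mul]
    refine (mul_le_mul_right (hset U hU) _).trans ?_
    rw [← mul_assoc, ENNReal.inv_mul_cancel hC0 ENNReal.ofReal_ne_top, one_mul]
  have hpos : Measure.hausdorffMeasure ((s.toNNReal : NNReal) : ℝ) E ≠ 0 := by
    rw [Real.coe_toNNReal s hs0.le]
    intro h0
    have h1 := hle E
    rw [h0, Measure.smul_apply, smul_eq_mul] at h1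
    have h2 := mul_eq_zero.mp (le_antisymm h1 zero_le)
    rcases h2 with h2 | h2
    · exact ENNReal.ofReal_ne_top (ENNReal.inv_eq_zero.mp h2)
    · rw [h2] at hE
      exact absurd hE (by norm_num)
  exact le_dimH_of_hausdorffMeasure_ne_zero hpos

/-- lower bound for the dimension of a product of shrinking target sets. -/
theorem stmt12 (d : ℕ) (hd : 1 ≤ d) (ψ : Fin d → ℕ → ℝ) (hψ : ∀ i n, 0 < ψ i n)
    (b : Fin d → ℕ) (hb : ∀ i, 2 ≤ b i) :
    (⨅ i, ((d : ℝ≥0∞) - 1 + dimH (Sset (b i) (ψ i)))) ≤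
      dimH {x : Fin d → ℝ | ∀ i, x i ∈ Sset (b i) (ψ i)} := by
  have hne : Nonempty (Fin d) := ⟨⟨0, hd⟩⟩
  obtain ⟨i₀, hi₀⟩ := Finite.exists_min (fun i => dimH (Sset (b i) (ψ i)))
  refine (iInf_le _ i₀).trans ?_
  have htop : dimH (Sset (b i₀) (ψ i₀)) ≠ ⊤ := Real.dimH_ne_top _
  set δ : ℝ := (dimH (Sset (b i₀) (ψ i₀))).toReal with hδ
  have hδe : ENNReal.ofReal δ = dimH (Sset (b i₀) (ψ i₀)) := ENNReal.ofReal_toReal htop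
  have hδ0 : 0 ≤ δ := ENNReal.toReal_nonneg
  have hδ1 : δ ≤ 1 := by
    have h1 : dimH (Sset (b i₀) (ψ i₀)) ≤ 1 :=
      (dimH_mono (Set.subset_univ _)).trans Real.dimH_univ.le
    simpa using ENNReal.toReal_mono ENNReal.one_ne_top h1
  have hd1 : (1 : ℝ) ≤ d := by exact_mod_cast hd
  have hcast : (d : ℝ≥0∞) - 1 = ENNReal.ofReal ((d : ℝ) - 1) := by
    rw [ENNReal.ofReal_sub _ zero_le_one]; simp
  rw [hcast, ← hδe, ← ENNReal.ofReal_add (by linarith) hδ0]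
  have key : ∀ ε : ℝ, 0 < ε → ENNReal.ofReal ((d : ℝ) - 1 + δ - 2 * ε) ≤
      dimH {x : Fin d → ℝ | ∀ i, x i ∈ Sset (b i) (ψ i)} := by
    intro ε hε
    let t : ℝ := max (δ - ε) 0
    have ht0 : 0 ≤ t := le_max_right _ _
    have ht1 : t ≤ 1 := max_le (by linarith) zero_le_one
    refine le_trans (ENNReal.ofReal_le_ofReal ?_)
      (lower_bound hd ψ b hb t ε ht0 ht1 hε ?_)
    · have : δ - ε ≤ t := le_max_left _ _
      linarith
    intro i
    rcases ht0.eq_or_lt with h | h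
    · refine Frequently.of_forall (fun n => ?_)
      have hb1 : (1 : ℝ) < b i := by exact_mod_cast hb i
      have hb0 : (0 : ℝ) < b i := by linarith
      obtain ⟨k, hk⟩ := exists_pow_lt_of_lt_one (hψ i n) (inv_lt_one_of_one_lt₀ hb1)
      refine ⟨n + k, by omega, ?_, ?_⟩
      · rw [pow_add, div_mul_eq_div_div, div_self (by positivity), one_div, ← inv_pow]
        exact hk
      · rw [← h, zero_mul]; positivity
    · by_contra hcon
      rw [not_frequently] at hcon
      have hup := dimH_upper (hb i) (ψ i) t h ht1 (by
        filter_upwards [hcon] with n hn L h1 h2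
        by_contra h3
        exact hn ⟨L, h1, not_le.mp h3, h2⟩)
      have h1 : ENNReal.ofReal δ ≤ ENNReal.ofReal t := by
        rw [hδe]; exact (hi₀ i).trans hup
      have h2 : δ ≤ t := (ENNReal.ofReal_le_ofReal_iff ht0).mp h1
      have h3 : t = δ - ε := by
        rcases max_choice (δ - ε) 0 with h4 | h4
        · exact h4
        · exact absurd h4 h.ne'
      linarith
  have hlim : Tendsto (fun ε : ℝ => ENNReal.ofReal ((d : ℝ) - 1 + δ - 2 * ε))
      (nhdsWithin 0 (Set.Ioi 0)) (nhds (ENNReal.ofReal ((d : ℝ) - 1 + δ - 2 * 0))) := by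
    refine ENNReal.tendsto_ofReal (Tendsto.mono_left ?_ nhdsWithin_le_nhds)
    exact (Continuous.tendsto (by fun_prop) 0)
  rw [mul_zero, sub_zero] at hlim
  refine le_of_tendsto hlim ?_
  filter_upwards [self_mem_nhdsWithin] with ε hε
  exact key ε hε
end
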